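/- arXiv:2312.15007 — 3 statements merged into one kernel-verified Lean document; each statement's English description precedes it below -/
import Mathlib

section
/- Let Ω ⊆ ℝ^N be a domain satisfying a uniform exterior sphere condition with radius r₀ > 0, i.e., for every x⁰ ∈ ∂Ω there is y⁰ ∈ ℝ^N ∖ Ω with the closed ball B̄_{r₀}(y⁰) intersecting Ω̄ exactly in {x⁰}. Let m > 2, α ∈ (0,1), and let u ∈ C(Ω̄) ∩ C^{1,α}(Ω) be a weak solution of -Δ_m u = f in Ω with u = 0 on ∂Ω, where f ∈ L^∞(Ω) ∩ C(Ω̄). Let M > 0 satisfy ‖u‖_{L^∞(Ω)} + ‖f‖_{L^∞(Ω)} < M. Then for every x⁰ ∈ ∂Ω and every x ∈ Ω ∩ B₁(x⁰), one has |u(x) - u(x⁰)| ≤ C|x - x⁰|, where C > 0 depends only on m, N, r₀ and M. -/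
/-!
The estimate is a barrier argument. Given `x⁰ ∈ ∂Ω` with exterior ball `B̄_{r₀}(y)`, consider the
function `w(x) = K/(2λ) (e^{-λ r₀²} - e^{-λ|x - y|²})` (`barrier`). It vanishes on
`|x - y| = r₀`, is positive on `Ω`, and its flux is the radial field
`|∇w|^{m-2} ∇w = β(|x - y|²)(x - y)` (`flux_barrier`), whose divergence is explicit. Hence `λ`
(depending on `m`, `N`, `r₀`) and then `K` (depending also on `M`) can be chosen so that
`-Δ_m w ≥ M` for `r₀ ≤ |x - y| ≤ r₀ + 1` and `w ≥ M` for `|x - y| ≥ r₀ + 1`. Comparison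
(`le_barrier`) gives `u ≤ w` in `Ω`; applied to `-u` as well, it gives `|u| ≤ w`. Since
`w(x) ≤ (K/2)(|x - y|² - r₀²)`, the bound `C |x - x⁰|` follows on `Ω ∩ B₁(x⁰)`.

For the comparison, `u` and `w` are tested with `φ = ((u - w - ε)⁺)²`, which is `C¹` and, by the
boundary values, compactly supported in `Ω`. As the weak equation of `u` only admits smooth test
functions, it is first extended to `C¹` ones by mollification (`weak_form_C1`); the equation of `w`
is an integration by parts (`barrier_weak`). Because `-Δ_m w` is strictly larger than `f` on the
support of `φ`, plain monotonicity of `z ↦ |z|^{m-2} z` (`pLaplace_monotone`) suffices.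
-/

open MeasureTheory Filter Metric Set
open scoped ENNReal NNReal RealInnerProductSpace Topology

noncomputable section

/-- Euclidean space `ℝ^N`. -/
abbrev Euc (N : ℕ) := EuclideanSpace ℝ (Fin N)

variable {N : ℕ}

/-- A smooth test function compactly supported inside the set `Ω`. -/
def IsTestFun (Ω : Set (Euc N)) (φ : Euc N → ℝ) : Prop :=
  ContDiff ℝ (⊤ : ℕ∞) φ ∧ HasCompactSupport φ ∧ tsupport φ ⊆ Ω

/-- Membership in `W^{1,m}_0(Ω)`: `u` and its gradient are in `L^m(Ω)`, and `u` can be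
approximated by smooth compactly supported functions in the `W^{1,m}(Ω)` norm. -/
def MemW1m0 (Ω : Set (Euc N)) (m : ℝ) (u : Euc N → ℝ) : Prop :=
  IntegrableOn (fun x => |u x| ^ m) Ω ∧
  IntegrableOn (fun x => ‖gradient u x‖ ^ m) Ω ∧
  ∀ ε : ℝ, 0 < ε → ∃ φ : Euc N → ℝ, IsTestFun Ω φ ∧
    (∫ x in Ω, |u x - φ x| ^ m) + (∫ x in Ω, ‖gradient u x - gradient φ x‖ ^ m) < ε

/-- `u > 0` almost everywhere on `Ω`. -/
def PosOn (Ω : Set (Euc N)) (u : Euc N → ℝ) : Prop :=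
  ∀ᵐ x ∂(volume.restrict Ω), 0 < u x

/-- `u` is a weak solution of `-Δ_m u = lam * u^{m-1} + mu * u^{p-1}` in `Ω`. -/
def IsWeakSol (Ω : Set (Euc N)) (m lam mu p : ℝ) (u : Euc N → ℝ) : Prop :=
  ∀ φ : Euc N → ℝ, IsTestFun Ω φ →
    (∫ x in Ω, ‖gradient u x‖ ^ (m - 2) * ⟪gradient u x, gradient φ x⟫)
      = ∫ x in Ω, (lam * u x ^ (m - 1) + mu * u x ^ (p - 1)) * φ x

/-- A positive weak solution of `-Δ_m u = lam * u^{m-1} + mu * u^{p-1}` lying in `W^{1,m}_0(Ω)`. -/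
def IsPosSol (Ω : Set (Euc N)) (m lam mu p : ℝ) (u : Euc N → ℝ) : Prop :=
  MemW1m0 Ω m u ∧ PosOn Ω u ∧ IsWeakSol Ω m lam mu p u

/-- The first Dirichlet eigenvalue of the `m`-Laplacian on `Ω`. -/
def firstEigen (Ω : Set (Euc N)) (m : ℝ) : ℝ :=
  sInf ((fun φ => ∫ x in Ω, ‖gradient φ x‖ ^ m) ''
    {φ : Euc N → ℝ | MemW1m0 Ω m φ ∧ (∫ x in Ω, |φ x| ^ m) = 1})

/-- The `L^∞(Ω)` norm. -/
def supNorm (Ω : Set (Euc N)) (u : Euc N → ℝ) : ℝ :=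
  (eLpNorm u ⊤ (volume.restrict Ω)).toReal

/-- `ℝ^{N-1} × ℝ` with the Euclidean norm. -/
abbrev Euc' (N : ℕ) := WithLp 2 (EuclideanSpace ℝ (Fin (N - 1)) × ℝ)

/-- `Ω` is, near each boundary point and in suitable orthonormal coordinates, the region above
the graph of a function belonging to the class `P`. -/
def BoundaryGraph (Ω : Set (Euc N)) (P : (EuclideanSpace ℝ (Fin (N - 1)) → ℝ) → Prop) : Prop :=
  ∀ x ∈ frontier Ω, ∃ (A : Euc N ≃ₗᵢ[ℝ] Euc' N) (r : ℝ)
      (g : EuclideanSpace ℝ (Fin (N - 1)) → ℝ),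
    0 < r ∧ P g ∧
    ∀ y ∈ Metric.ball x r,
      (y ∈ Ω ↔ g (WithLp.equiv 2 (EuclideanSpace ℝ (Fin (N - 1)) × ℝ) (A y)).1
        < (WithLp.equiv 2 (EuclideanSpace ℝ (Fin (N - 1)) × ℝ) (A y)).2)

/-- Boundary of class `C²`. -/
def IsC2Boundary (Ω : Set (Euc N)) : Prop :=
  BoundaryGraph Ω fun g => ContDiff ℝ 2 g

/-- Boundary of class `C^{1,α}`. -/
def IsC1HolderBoundary (Ω : Set (Euc N)) (α : ℝ) : Prop :=
  BoundaryGraph Ω fun g => ContDiff ℝ 1 g ∧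
    ∃ C : ℝ, ∀ y z, ‖fderiv ℝ g y - fderiv ℝ g z‖ ≤ C * dist y z ^ α

/-- A bounded domain of class `C²`. -/
def BoundedC2Domain (Ω : Set (Euc N)) : Prop :=
  IsOpen Ω ∧ IsConnected Ω ∧ Bornology.IsBounded Ω ∧ IsC2Boundary Ω

/-- `‖u‖_{C^{1,χ}(closure Ω)} ≤ L`. -/
def C1HolderNormLE (Ω : Set (Euc N)) (χ : ℝ) (u : Euc N → ℝ) (L : ℝ) : Prop :=
  ContinuousOn u (closure Ω) ∧ ContinuousOn (gradient u) (closure Ω) ∧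
  (∀ x ∈ closure Ω, |u x| + ‖gradient u x‖ ≤ L) ∧
  ∀ x ∈ closure Ω, ∀ y ∈ closure Ω, ‖gradient u x - gradient u y‖ ≤ L * dist x y ^ χ

open Classical in
/-- The quadratic form `⟨D²ℋ(z) ξ, ξ⟩` of the Hessian of `ℋ(z) = |z|^m / m`, interpreted
as `0` when `z = 0`. -/
def Qm (m : ℝ) (z ξ : Euc N) : ℝ :=
  if z = 0 then 0
  else ‖z‖ ^ (m - 2) * ‖ξ‖ ^ 2 + (m - 2) * ‖z‖ ^ (m - 4) * ⟪z, ξ⟫ ^ 2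

/-- `Ω` satisfies the uniform exterior sphere condition with radius `r₀`. -/
def UnifExtSphere (Ω : Set (Euc N)) (r₀ : ℝ) : Prop :=
  ∀ x ∈ frontier Ω, ∃ y : Euc N, y ∉ Ω ∧ Metric.closedBall y r₀ ∩ closure Ω = {x}

/-- `u` is a weak solution of `-Δ_m u = f` in `Ω`. -/
def IsWeakSolRHS (Ω : Set (Euc N)) (m : ℝ) (f u : Euc N → ℝ) : Prop :=
  ∀ φ : Euc N → ℝ, IsTestFun Ω φ →
    (∫ x in Ω, ‖gradient u x‖ ^ (m - 2) * ⟪gradient u x, gradient φ x⟫)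
      = ∫ x in Ω, f x * φ x

/-! ### Extension of the weak formulation to `C¹` test functions -/

lemma integrable_of_tsupport {E F : Type*} [NormedAddCommGroup E] [NormedSpace ℝ E]
    [MeasurableSpace E] [BorelSpace E] [NormedAddCommGroup F] {μ : Measure E}
    [IsFiniteMeasureOnCompacts μ] {s : Set E} (hs : IsOpen s) {K : Set E} (hK : IsCompact K)
    (hKs : K ⊆ s) {g : E → F} (hg : ContinuousOn g s) (h0 : ∀ x ∉ K, g x = 0) :
    Integrable g μ := by
  have hts : tsupport g ⊆ K := closure_minimal (fun x hx => by
    by_contra h; exact hx (h0 x h)) hK.isClosed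
  refine Continuous.integrable_of_hasCompactSupport ?_ (HasCompactSupport.intro hK h0)
  exact continuous_of_tsupport fun x hx => hg.continuousAt (hs.mem_nhds (hKs (hts hx)))

/-- Mollification: a compactly supported `C¹` function in an open set `Ω` is a limit, in the
`C¹` norm, of test functions all supported in one compact subset of `Ω`. -/
lemma exists_testFun_approx {N : ℕ} {Ω : Set (Euc N)} (hΩ : IsOpen Ω) {φ : Euc N → ℝ}
    (hφ : ContDiff ℝ 1 φ) (hc : HasCompactSupport φ) (hs : tsupport φ ⊆ Ω) :
    ∃ K : Set (Euc N), IsCompact K ∧ K ⊆ Ω ∧ tsupport φ ⊆ K ∧ ∀ η > (0 : ℝ),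
      ∃ ψ : Euc N → ℝ, IsTestFun Ω ψ ∧ tsupport ψ ⊆ K ∧
        (∀ x, |ψ x - φ x| ≤ η) ∧ ∀ x, ‖fderiv ℝ ψ x - fderiv ℝ φ x‖ ≤ η := by
  obtain ⟨δ, hδ, hδΩ⟩ := IsCompact.exists_cthickening_subset_open hc hΩ hs
  refine ⟨cthickening δ (tsupport φ), IsCompact.cthickening hc, hδΩ,
    self_subset_cthickening _, fun η hη => ?_⟩
  have hdc : Continuous (fderiv ℝ φ) := hφ.continuous_fderiv one_ne_zero
  have hu1 := hc.uniformContinuous_of_continuous hφ.continuous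
  have hu2 := (hc.fderiv ℝ).uniformContinuous_of_continuous hdc
  obtain ⟨d1, hd1, h1⟩ := Metric.uniformContinuous_iff.1 hu1 η hη
  obtain ⟨d2, hd2, h2⟩ := Metric.uniformContinuous_iff.1 hu2 η hη
  set d := min δ (min d1 d2) with hd
  have hdpos : 0 < d := by positivity
  let b : ContDiffBump (0 : Euc N) := ⟨d / 2, d, by positivity, by linarith⟩
  have hbint : LocallyIntegrable (b.normed volume) volume :=
    b.integrable_normed.locallyIntegrable
  set ψ : Euc N → ℝ := convolution (b.normed volume) φ (ContinuousLinearMap.lsmul ℝ ℝ) volume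
    with hψ
  have hsupp : tsupport ψ ⊆ cthickening δ (tsupport φ) := by
    refine closure_minimal ?_ isClosed_cthickening
    refine (support_convolution_subset_swap _).trans ?_
    rintro _ ⟨x, hx, y, hy, rfl⟩
    rw [b.support_normed_eq, mem_ball_zero_iff] at hy
    refine mem_cthickening_of_dist_le _ x δ _ (subset_tsupport _ hx) ?_
    have : ‖y‖ < d := hy
    simp only [dist_eq_norm, add_sub_cancel_left]
    exact this.le.trans (min_le_left _ _)
  have hder : ∀ x, HasFDerivAt ψ (convolution (b.normed volume) (fderiv ℝ φ)
      (ContinuousLinearMap.lsmul ℝ ℝ) volume x) x := fun x =>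
    hc.hasFDerivAt_convolution_right (ContinuousLinearMap.lsmul ℝ ℝ) hbint hφ x
  refine ⟨ψ, ⟨?_, ?_, hsupp.trans hδΩ⟩, hsupp, fun x => ?_, fun x => ?_⟩
  · exact b.hasCompactSupport_normed.contDiff_convolution_left _ b.contDiff_normed
      hφ.continuous.locallyIntegrable
  · exact (IsCompact.cthickening hc).of_isClosed_subset isClosed_closure hsupp
  · rw [← Real.dist_eq]
    refine b.dist_normed_convolution_le hφ.continuous.aestronglyMeasurable fun z hz => ?_
    exact (h1 (lt_of_lt_of_le hz ((min_le_right _ _).trans (min_le_left _ _)))).le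
  · rw [(hder x).fderiv, ← dist_eq_norm]
    refine b.dist_normed_convolution_le hdc.aestronglyMeasurable fun z hz => ?_
    exact (h2 (lt_of_lt_of_le hz ((min_le_right _ _).trans (min_le_right _ _)))).le

/-- A weak identity `∫ Dφ(V) = ∫ f φ` against smooth test functions persists for compactly
supported `C¹` functions `φ`. -/
lemma weak_form_C1 {N : ℕ} {Ω : Set (Euc N)} (hΩ : IsOpen Ω) {V : Euc N → Euc N} {f : Euc N → ℝ}
    (hV : ContinuousOn V Ω) (hf : ContinuousOn f Ω)
    (hw : ∀ ψ, IsTestFun Ω ψ → ∫ x in Ω, fderiv ℝ ψ x (V x) = ∫ x in Ω, f x * ψ x)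
    {φ : Euc N → ℝ} (hφ : ContDiff ℝ 1 φ) (hc : HasCompactSupport φ) (hs : tsupport φ ⊆ Ω) :
    ∫ x, fderiv ℝ φ x (V x) = ∫ x, f x * φ x := by
  obtain ⟨K, hK, hKΩ, hφK, happ⟩ := exists_testFun_approx hΩ hφ hc hs
  -- the functional `T ψ = ∫ (Dψ(V) - f ψ)` is `C¹`-continuous on functions supported in `K`
  have hint : ∀ ψ : Euc N → ℝ, ContDiff ℝ 1 ψ → tsupport ψ ⊆ K →
      Integrable (fun x => fderiv ℝ ψ x (V x) - f x * ψ x) ∧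
      Integrable (fun x => fderiv ℝ ψ x (V x)) ∧ Integrable (fun x => f x * ψ x) := by
    intro ψ hψ hψK
    have a1 : Integrable (fun x => fderiv ℝ ψ x (V x)) := by
      refine integrable_of_tsupport hΩ hK hKΩ
        ((hψ.continuous_fderiv one_ne_zero).continuousOn.clm_apply hV) fun x hx => ?_
      rw [image_eq_zero_of_notMem_tsupport (f := fderiv ℝ ψ)
        (fun h => hx (hψK (tsupport_fderiv_subset ℝ h)))]
      rfl
    have a2 : Integrable (fun x => f x * ψ x) := by
      refine integrable_of_tsupport hΩ hK hKΩ (hf.mul hψ.continuous.continuousOn) fun x hx => ?_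
      rw [image_eq_zero_of_notMem_tsupport (fun h => hx (hψK h)), mul_zero]
    exact ⟨a1.sub a2, a1, a2⟩
  obtain ⟨B1, hB1⟩ := hK.exists_bound_of_continuousOn (hV.mono hKΩ)
  obtain ⟨B2, hB2⟩ := hK.exists_bound_of_continuousOn (hf.mono hKΩ)
  have key : ∀ η > (0 : ℝ), |∫ x, (fderiv ℝ φ x (V x) - f x * φ x)|
      ≤ η * ((|B1| + |B2|) * volume.real K) := by
    intro η hη
    obtain ⟨ψ, hψt, hψK, h1, h2⟩ := happ η hη
    have hψ1 : ContDiff ℝ 1 ψ := hψt.1.of_le (by exact_mod_cast le_top)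
    obtain ⟨i1, i2, i3⟩ := hint ψ hψ1 hψK
    obtain ⟨j1, j2, j3⟩ := hint φ hφ hφK
    have hzero : ∫ x, (fderiv ℝ ψ x (V x) - f x * ψ x) = 0 := by
      have k1 : ∫ x in Ω, fderiv ℝ ψ x (V x) = ∫ x, fderiv ℝ ψ x (V x) := by
        refine setIntegral_eq_integral_of_forall_compl_eq_zero fun x hx => ?_
        rw [image_eq_zero_of_notMem_tsupport (f := fderiv ℝ ψ)
          (fun h => hx (hψt.2.2 (tsupport_fderiv_subset ℝ h)))]
        rfl
      have k2 : ∫ x in Ω, f x * ψ x = ∫ x, f x * ψ x := by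
        refine setIntegral_eq_integral_of_forall_compl_eq_zero fun x hx => ?_
        rw [image_eq_zero_of_notMem_tsupport (fun h => hx (hψt.2.2 h)), mul_zero]
      rw [integral_sub i2 i3, ← k1, ← k2, hw ψ hψt, sub_self]
    have hdiff : ∫ x, (fderiv ℝ φ x (V x) - f x * φ x) =
        ∫ x in K, ((fderiv ℝ φ x (V x) - f x * φ x) - (fderiv ℝ ψ x (V x) - f x * ψ x)) := by
      rw [setIntegral_eq_integral_of_forall_compl_eq_zero, integral_sub j1 i1, hzero, sub_zero]
      intro x hx
      have e1 : fderiv ℝ ψ x = 0 := image_eq_zero_of_notMem_tsupport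
        (fun h => hx (hψK (tsupport_fderiv_subset ℝ h)))
      have e2 : fderiv ℝ φ x = 0 := image_eq_zero_of_notMem_tsupport
        (fun h => hx (hφK (tsupport_fderiv_subset ℝ h)))
      have e3 : ψ x = 0 := image_eq_zero_of_notMem_tsupport (fun h => hx (hψK h))
      have e4 : φ x = 0 := image_eq_zero_of_notMem_tsupport (fun h => hx (hφK h))
      simp [e1, e2, e3, e4]
    rw [hdiff, ← mul_assoc, ← Real.norm_eq_abs]
    refine norm_setIntegral_le_of_norm_le_const hK.measure_lt_top fun x hx => ?_
    have e : (fderiv ℝ φ x (V x) - f x * φ x) - (fderiv ℝ ψ x (V x) - f x * ψ x)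
        = -((fderiv ℝ ψ x - fderiv ℝ φ x) (V x)) + f x * (ψ x - φ x) := by
      simp only [sub_apply]; ring
    rw [e]
    refine (norm_add_le _ _).trans ?_
    rw [norm_neg, norm_mul, mul_add]
    refine add_le_add ?_ ?_
    · refine (ContinuousLinearMap.le_opNorm _ _).trans ?_
      exact mul_le_mul (h2 x) ((hB1 x hx).trans (le_abs_self _)) (norm_nonneg _) hη.le
    · rw [mul_comm]
      exact mul_le_mul (h1 x) ((hB2 x hx).trans (le_abs_self _)) (norm_nonneg _) hη.le
  obtain ⟨_, j2, j3⟩ := hint φ hφ hφK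
  have h0 : ∫ x, (fderiv ℝ φ x (V x) - f x * φ x) = 0 := by
    set A := ∫ x, (fderiv ℝ φ x (V x) - f x * φ x)
    set c := (|B1| + |B2|) * volume.real K
    have hc0 : 0 ≤ c := by positivity
    by_contra hA
    have hA' : 0 < |A| := abs_pos.2 hA
    have := key (|A| / (2 * (c + 1))) (by positivity)
    rw [div_mul_eq_mul_div, le_div_iff₀ (by positivity)] at this
    nlinarith
  rw [integral_sub j2 j3] at h0
  linarith

/-! ### Integration by parts, monotonicity of the flux, and the truncation `(t⁺)²` -/

/-- Integration by parts `∫ Dφ(V) = -∫ φ div V`; the divergence is written as the coordinate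
trace of the derivative `V'` of the vector field. -/
lemma integral_fderiv_apply_eq_neg_div {N : ℕ} {U : Set (Euc N)} (hU : IsOpen U)
    {V : Euc N → Euc N} {V' : Euc N → Euc N →L[ℝ] Euc N}
    (hV : ∀ x ∈ U, HasFDerivAt V (V' x) x) (hV' : ContinuousOn V' U)
    {φ : Euc N → ℝ} (hφ : ContDiff ℝ 1 φ) (hc : HasCompactSupport φ) (hs : tsupport φ ⊆ U) :
    ∫ x, fderiv ℝ φ x (V x)
      = -∫ x, (∑ i, V' x (EuclideanSpace.single i 1) i) * φ x := by
  have hVc : ContinuousOn V U := fun x hx => (hV x hx).continuousAt.continuousWithinAt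
  have hdc : Continuous (fderiv ℝ φ) := hφ.continuous_fderiv one_ne_zero
  have hcoord : ∀ i, ∀ x ∈ U, HasFDerivAt (fun x => V x i)
      ((EuclideanSpace.proj i : Euc N →L[ℝ] ℝ).comp (V' x)) x := fun i x hx =>
    (EuclideanSpace.proj i : Euc N →L[ℝ] ℝ).hasFDerivAt.comp x (hV x hx)
  have hVi : ∀ i, ContinuousOn (fun x => V x i) U := fun i x hx =>
    (hcoord i x hx).continuousAt.continuousWithinAt
  have hV'i : ∀ i, ContinuousOn (fun x => V' x (EuclideanSpace.single i 1) i) U := fun i =>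
    (EuclideanSpace.proj i : Euc N →L[ℝ] ℝ).continuous.comp_continuousOn
      (hV'.clm_apply continuousOn_const)
  have hφ0 : ∀ x ∉ tsupport φ, φ x = 0 := fun x hx => image_eq_zero_of_notMem_tsupport hx
  have hdφ0 : ∀ x ∉ tsupport φ, fderiv ℝ φ x = 0 := fun x hx =>
    image_eq_zero_of_notMem_tsupport (fun h => hx (tsupport_fderiv_subset ℝ h))
  have hI1 : ∀ i, Integrable (fun x => V x i * fderiv ℝ φ x (EuclideanSpace.single i 1)) := by
    intro i
    refine integrable_of_tsupport hU hc hs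
      ((hVi i).mul (hdc.clm_apply continuous_const).continuousOn) fun x hx => ?_
    simp [hdφ0 x hx]
  have hI2 : ∀ i, Integrable (fun x => V' x (EuclideanSpace.single i 1) i * φ x) := by
    intro i
    refine integrable_of_tsupport hU hc hs
      ((hV'i i).mul hφ.continuous.continuousOn) fun x hx => ?_
    simp [hφ0 x hx]
  have hfd : ∀ i x, fderiv ℝ (fun x => V x i) x (EuclideanSpace.single i 1) * φ x
      = V' x (EuclideanSpace.single i 1) i * φ x := by
    intro i x
    by_cases hx : x ∈ tsupport φ
    · rw [(hcoord i x (hs hx)).fderiv]; rfl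
    · simp [hφ0 x hx]
  have hibp : ∀ i, ∫ x, V x i * fderiv ℝ φ x (EuclideanSpace.single i 1)
      = -∫ x, V' x (EuclideanSpace.single i 1) i * φ x := by
    intro i
    rw [← integral_congr_ae (Eventually.of_forall (hfd i))]
    refine integral_mul_fderiv_eq_neg_fderiv_mul_of_integrable ?_ (hI1 i) ?_ ?_ ?_
    · exact (hI2 i).congr (Eventually.of_forall fun x => (hfd i x).symm)
    · refine integrable_of_tsupport hU hc hs
        ((hVi i).mul hφ.continuous.continuousOn) fun x hx => ?_
      simp [hφ0 x hx]
    · exact fun x hx => (hcoord i x (hs hx)).differentiableAt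
    · exact fun x _ => (hφ.differentiable one_ne_zero) x
  have hexp : ∀ x, fderiv ℝ φ x (V x)
      = ∑ i, V x i * fderiv ℝ φ x (EuclideanSpace.single i 1) := by
    intro x
    conv_lhs => rw [← (EuclideanSpace.basisFun (Fin N) ℝ).sum_repr (V x)]
    simp [map_sum]
  simp_rw [hexp, Finset.sum_mul]
  rw [integral_finsetSum _ (fun i _ => hI1 i), integral_finsetSum _ (fun i _ => hI2 i),
    ← Finset.sum_neg_distrib]
  exact Finset.sum_congr rfl fun i _ => hibp i

/-- Integration by parts for a radial field `V(x) = β(|x - y|²) (x - y)`, whose divergence is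
`N β(s) + 2 s β'(s)` with `s = |x - y|²`. -/
lemma integral_fderiv_radial {N : ℕ} {y : Euc N} {β β' : ℝ → ℝ}
    (hβ : ∀ s > 0, HasDerivAt β (β' s) s) (hβ' : ContinuousOn β' (Ioi 0))
    {φ : Euc N → ℝ} (hφ : ContDiff ℝ 1 φ) (hc : HasCompactSupport φ) (hs : y ∉ tsupport φ) :
    ∫ x, fderiv ℝ φ x (β (‖x - y‖ ^ 2) • (x - y))
      = ∫ x, -(N * β (‖x - y‖ ^ 2) + 2 * ‖x - y‖ ^ 2 * β' (‖x - y‖ ^ 2)) * φ x := by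
  have hpos : ∀ x ∈ ({y}ᶜ : Set (Euc N)), 0 < ‖x - y‖ ^ 2 := fun x hx => by
    have : 0 < ‖x - y‖ := norm_pos_iff.2 (sub_ne_zero.2 hx)
    positivity
  have hsq : ∀ x : Euc N, HasFDerivAt (fun x => ‖x - y‖ ^ 2) (2 • innerSL ℝ (x - y)) x := by
    intro x
    have := ((hasFDerivAt_id x).sub_const y).norm_sq
    simpa using this
  have hV : ∀ x ∈ ({y}ᶜ : Set (Euc N)), HasFDerivAt (fun x => β (‖x - y‖ ^ 2) • (x - y))
      (β (‖x - y‖ ^ 2) • ContinuousLinearMap.id ℝ (Euc N)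
        + (β' (‖x - y‖ ^ 2) • (2 • innerSL ℝ (x - y))).smulRight (x - y)) x := by
    intro x hx
    exact ((hβ _ (hpos x hx)).comp_hasFDerivAt x (hsq x)).smul ((hasFDerivAt_id x).sub_const y)
  have hnc : Continuous fun x : Euc N => ‖x - y‖ ^ 2 := by fun_prop
  have hβc : ContinuousOn β (Ioi 0) := fun s hs => (hβ s hs).continuousAt.continuousWithinAt
  have hV' : ContinuousOn (fun x => (β (‖x - y‖ ^ 2) • ContinuousLinearMap.id ℝ (Euc N)
        + (β' (‖x - y‖ ^ 2) • (2 • innerSL ℝ (x - y))).smulRight (x - y))) ({y}ᶜ) := by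
    refine ContinuousOn.add
      ((hβc.comp hnc.continuousOn hpos).smul continuousOn_const) ?_
    have h1 : ContinuousOn (fun x => β' (‖x - y‖ ^ 2) • (2 • innerSL ℝ (x - y))) ({y}ᶜ) := by
      refine (hβ'.comp hnc.continuousOn hpos).smul (Continuous.continuousOn ?_)
      fun_prop
    have h2 : ContinuousOn (fun x : Euc N => x - y) ({y}ᶜ) := by fun_prop
    exact ((ContinuousLinearMap.smulRightL ℝ (Euc N) (Euc N)).continuous.comp_continuousOn
      h1).clm_apply h2
  rw [integral_fderiv_apply_eq_neg_div isOpen_compl_singleton hV hV' hφ hc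
    (fun x hx => fun h => hs (h ▸ hx)), ← integral_neg]
  congr 1
  ext x
  rw [← neg_mul]
  congr 2
  have hn : ‖x - y‖ ^ 2 = ∑ i, (x - y) i * (x - y) i := by
    rw [EuclideanSpace.norm_sq_eq]
    exact Finset.sum_congr rfl fun i _ => by rw [Real.norm_eq_abs, sq_abs, sq]
  have : ∀ i : Fin N, ((β (‖x - y‖ ^ 2) • ContinuousLinearMap.id ℝ (Euc N)
        + (β' (‖x - y‖ ^ 2) • (2 • innerSL ℝ (x - y))).smulRight (x - y))
        (EuclideanSpace.single i 1)) i
      = β (‖x - y‖ ^ 2) + β' (‖x - y‖ ^ 2) * 2 * ((x - y) i * (x - y) i) := by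
    intro i
    simp [EuclideanSpace.inner_single_right]
    ring
  rw [Finset.sum_congr rfl fun i _ => this i, Finset.sum_add_distrib, ← Finset.mul_sum, ← hn]
  simp
  ring

/-- Monotonicity of `z ↦ |z|^p z`. -/
lemma pLaplace_monotone {N : ℕ} {p : ℝ} (hp : 0 ≤ p) (a b : Euc N) :
    0 ≤ ⟪a - b, ‖a‖ ^ p • a - ‖b‖ ^ p • b⟫ := by
  have hab : ⟪a, b⟫ ≤ ‖a‖ * ‖b‖ := real_inner_le_norm a b
  have hA : 0 ≤ ‖a‖ ^ p := by positivity
  have hB : 0 ≤ ‖b‖ ^ p := by positivity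
  have e : ⟪a - b, ‖a‖ ^ p • a - ‖b‖ ^ p • b⟫
      = ‖a‖ ^ p * ‖a‖ ^ 2 + ‖b‖ ^ p * ‖b‖ ^ 2 - (‖a‖ ^ p + ‖b‖ ^ p) * ⟪a, b⟫ := by
    simp only [inner_sub_left, inner_sub_right, inner_smul_right, real_inner_self_eq_norm_sq,
      real_inner_comm a b]
    ring
  have hmono : 0 ≤ (‖a‖ ^ p * ‖a‖ - ‖b‖ ^ p * ‖b‖) * (‖a‖ - ‖b‖) := by
    rcases le_total ‖a‖ ‖b‖ with h | h
    · have : ‖a‖ ^ p * ‖a‖ ≤ ‖b‖ ^ p * ‖b‖ := by gcongr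
      nlinarith
    · have : ‖b‖ ^ p * ‖b‖ ≤ ‖a‖ ^ p * ‖a‖ := by gcongr
      nlinarith
  rw [e]
  nlinarith [mul_le_mul_of_nonneg_left hab (add_nonneg hA hB)]

lemma hasDerivAt_max_zero_sq (t : ℝ) :
    HasDerivAt (fun t : ℝ => max t 0 ^ 2) (2 * max t 0) t := by
  rcases lt_trichotomy t 0 with h | h | h
  · rw [max_eq_right h.le, mul_zero]
    refine (hasDerivAt_const t (0 : ℝ)).congr_of_eventuallyEq ?_
    filter_upwards [Iio_mem_nhds h] with s hs
    rw [max_eq_right (le_of_lt hs)]; simp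
  · subst h
    rw [hasDerivAt_iff_isLittleO]
    simp only [max_self, sub_zero, mul_zero, smul_zero, ne_eq, OfNat.ofNat_ne_zero,
      not_false_eq_true, zero_pow]
    refine Asymptotics.IsBigO.trans_isLittleO (g := fun s : ℝ => s ^ 2) ?_ ?_
    · refine Asymptotics.IsBigO.of_bound 1 (Eventually.of_forall fun s => ?_)
      rw [one_mul, norm_pow, norm_pow]
      refine pow_le_pow_left₀ (norm_nonneg _) ?_ 2
      rw [Real.norm_eq_abs, Real.norm_eq_abs, abs_of_nonneg (le_max_right _ _)]
      exact max_le (le_abs_self _) (abs_nonneg _)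
    · exact Asymptotics.isLittleO_pow_id one_lt_two
  · rw [max_eq_left h.le]
    have := hasDerivAt_pow 2 t
    refine (this.congr_of_eventuallyEq ?_).congr_deriv (by simp)
    filter_upwards [Ioi_mem_nhds h] with s hs
    rw [max_eq_left (le_of_lt hs)]

lemma contDiff_max_zero_sq : ContDiff ℝ 1 (fun t : ℝ => max t 0 ^ 2) := by
  rw [contDiff_one_iff_deriv]
  refine ⟨fun t => (hasDerivAt_max_zero_sq t).differentiableAt, ?_⟩
  rw [funext fun t => (hasDerivAt_max_zero_sq t).deriv]
  fun_prop

/-! ### The barrier and the comparison principle -/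

/-- The barrier `w(x) = K/(2λ) (e^{-λ r₀²} - e^{-λ|x - y|²})`, vanishing on the sphere
`|x - y| = r₀`. -/
def barrier {N : ℕ} (K lam r₀ : ℝ) (y x : Euc N) : ℝ :=
  K / (2 * lam) * (Real.exp (-lam * r₀ ^ 2) - Real.exp (-lam * ‖x - y‖ ^ 2))

/-- The profile `β` for which `|∇w|^{m-2} ∇w = β(|x - y|²) (x - y)`, `w` being the barrier. -/
def fluxProfile (K lam m s : ℝ) : ℝ :=
  K ^ (m - 1) * Real.exp (-lam * (m - 1) * s) * s ^ ((m - 2) / 2)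

lemma contDiff_barrier {N : ℕ} (K lam r₀ : ℝ) (y : Euc N) :
    ContDiff ℝ 1 (barrier K lam r₀ y) := by
  unfold barrier
  exact contDiff_const.mul (contDiff_const.sub
    (contDiff_const.mul ((contDiff_id.sub contDiff_const).norm_sq ℝ)).exp)

lemma gradient_barrier {N : ℕ} {K lam r₀ : ℝ} (hl : lam ≠ 0) (y x : Euc N) :
    gradient (barrier K lam r₀ y) x = (K * Real.exp (-lam * ‖x - y‖ ^ 2)) • (x - y) := by
  have hsq : HasFDerivAt (fun x : Euc N => ‖x - y‖ ^ 2) (2 • innerSL ℝ (x - y)) x := by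
    simpa using ((hasFDerivAt_id x).sub_const y).norm_sq
  have h := (((hsq.const_mul (-lam)).exp).const_sub (Real.exp (-lam * r₀ ^ 2))).const_mul
    (K / (2 * lam))
  have h2 : HasGradientAt (barrier K lam r₀ y)
      ((K * Real.exp (-lam * ‖x - y‖ ^ 2)) • (x - y)) x := by
    rw [hasGradientAt_iff_hasFDerivAt]
    refine h.congr_fderiv ?_
    ext v
    simp
    field_simp
  exact h2.gradient

lemma flux_barrier {N : ℕ} {K lam r₀ m : ℝ} (hK : 0 < K) (hl : lam ≠ 0) {y x : Euc N}
    (hx : x ≠ y) :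
    ‖gradient (barrier K lam r₀ y) x‖ ^ (m - 2) • gradient (barrier K lam r₀ y) x
      = fluxProfile K lam m (‖x - y‖ ^ 2) • (x - y) := by
  have hp : 0 < ‖x - y‖ := norm_pos_iff.2 (sub_ne_zero.2 hx)
  have he := Real.exp_pos (-lam * ‖x - y‖ ^ 2)
  rw [gradient_barrier hl, smul_smul, norm_smul, Real.norm_of_nonneg (by positivity)]
  congr 1
  unfold fluxProfile
  rw [Real.mul_rpow (by positivity) hp.le, Real.mul_rpow hK.le he.le, ← Real.exp_mul]
  have e1 : (‖x - y‖ ^ 2) ^ ((m - 2) / 2) = ‖x - y‖ ^ (m - 2) := by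
    rw [← Real.rpow_natCast_mul hp.le]; congr 1; push_cast; ring
  have e2 : K ^ (m - 1) = K ^ (m - 2) * K := by
    rw [← Real.rpow_add_one hK.ne']; congr 1; ring
  have e3 : Real.exp (-lam * (m - 1) * ‖x - y‖ ^ 2)
      = Real.exp (-lam * ‖x - y‖ ^ 2 * (m - 2)) * Real.exp (-lam * ‖x - y‖ ^ 2) := by
    rw [← Real.exp_add]; congr 1; ring
  rw [e1, e2, e3]
  ring

lemma hasDerivAt_fluxProfile {K lam m s : ℝ} (hs : 0 < s) :
    HasDerivAt (fluxProfile K lam m)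
      (fluxProfile K lam m s * (-lam * (m - 1) + (m - 2) / (2 * s))) s := by
  have h1 : HasDerivAt (fun s : ℝ => Real.exp (-lam * (m - 1) * s))
      (Real.exp (-lam * (m - 1) * s) * (-lam * (m - 1))) s := by
    simpa using ((hasDerivAt_id s).const_mul (-lam * (m - 1))).exp
  have h2 := Real.hasDerivAt_rpow_const (x := s) (p := (m - 2) / 2) (Or.inl hs.ne')
  have h := (h1.const_mul (K ^ (m - 1))).mul h2
  refine h.congr_deriv ?_
  unfold fluxProfile
  rw [Real.rpow_sub_one hs.ne']
  field_simp

/-- `-Δ_m w` for the barrier `w`, as a function of `s = |x - y|²`. -/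
def barrierRHS (N : ℕ) (K lam m s : ℝ) : ℝ :=
  fluxProfile K lam m s * (2 * lam * (m - 1) * s - (m - 2) - N)

lemma continuousOn_fluxProfile (K lam m : ℝ) : ContinuousOn (fluxProfile K lam m) (Ioi 0) :=
  fun _ hs => (hasDerivAt_fluxProfile hs).continuousAt.continuousWithinAt

lemma barrier_weak {N : ℕ} {K lam r₀ m : ℝ} (hK : 0 < K) (hl : lam ≠ 0) {y : Euc N}
    {φ : Euc N → ℝ} (hφ : ContDiff ℝ 1 φ) (hc : HasCompactSupport φ) (hs : y ∉ tsupport φ) :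
    ∫ x, fderiv ℝ φ x
        (‖gradient (barrier K lam r₀ y) x‖ ^ (m - 2) • gradient (barrier K lam r₀ y) x)
      = ∫ x, barrierRHS N K lam m (‖x - y‖ ^ 2) * φ x := by
  have h := integral_fderiv_radial (y := y) (fun s hs => hasDerivAt_fluxProfile (K := K)
    (lam := lam) (m := m) hs) ?_ hφ hc hs
  · have e1 : ∀ x, fderiv ℝ φ x
        (‖gradient (barrier K lam r₀ y) x‖ ^ (m - 2) • gradient (barrier K lam r₀ y) x)
        = fderiv ℝ φ x (fluxProfile K lam m (‖x - y‖ ^ 2) • (x - y)) := by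
      intro x
      rcases eq_or_ne x y with rfl | hx
      · have : fderiv ℝ φ x = 0 := image_eq_zero_of_notMem_tsupport
          (fun h => hs (tsupport_fderiv_subset ℝ h))
        simp [this]
      · rw [flux_barrier hK hl hx]
    rw [integral_congr_ae (Eventually.of_forall e1), h]
    refine integral_congr_ae (Eventually.of_forall fun x => ?_)
    rcases eq_or_ne x y with rfl | hx
    · simp [image_eq_zero_of_notMem_tsupport hs]
    · have hp : 0 < ‖x - y‖ := norm_pos_iff.2 (sub_ne_zero.2 hx)
      simp only [barrierRHS]
      congr 1
      field_simp
      ring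
  · refine (continuousOn_fluxProfile K lam m).mul (continuousOn_const.add ?_)
    refine continuousOn_const.div (by fun_prop) fun s hs => ?_
    have : (0 : ℝ) < s := hs
    positivity

/-- Weak comparison with the barrier: the `C¹` function `φ = ((u - w - ε)⁺)²` is admissible in
the equations of both `u` and `w`; monotonicity of the flux makes the difference of the left-hand
sides nonnegative, while `f < -Δ_m w` makes the difference of the right-hand sides negative as
soon as `φ` is not identically zero. -/
lemma le_barrier {N : ℕ} {Ω : Set (Euc N)} {u f : Euc N → ℝ} {m r₀ K lam Mu Mf M : ℝ}
    (hm : 2 < m) (hr₀ : 0 < r₀) (hK : 0 < K) (hl : 0 < lam)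
    (hΩ : IsOpen Ω) (hu : ContinuousOn u (closure Ω)) (hu1 : ContDiffOn ℝ 1 u Ω)
    (hf : ContinuousOn f Ω) (huM : ∀ x ∈ Ω, u x ≤ Mu) (hfM : ∀ x ∈ Ω, f x ≤ Mf)
    (hMu : Mu ≤ M) (hMf : Mf < M) (hb : ∀ x ∈ frontier Ω, u x = 0)
    (hsol : IsWeakSolRHS Ω m f u) {y : Euc N} (hy : ∀ x ∈ Ω, r₀ < ‖x - y‖)
    (hK1 : M ≤ K / (2 * lam) * (Real.exp (-lam * r₀ ^ 2) - Real.exp (-lam * (r₀ + 1) ^ 2)))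
    (hK2 : ∀ s, r₀ ^ 2 ≤ s → s ≤ (r₀ + 1) ^ 2 → M ≤ barrierRHS N K lam m s) :
    ∀ x ∈ Ω, u x ≤ barrier K lam r₀ y x := by
  classical
  set w := barrier K lam r₀ y with hw
  have hwc : ContDiff ℝ 1 w := contDiff_barrier K lam r₀ y
  have hycl : ∀ x ∈ closure Ω, r₀ ≤ ‖x - y‖ := by
    have hcl : IsClosed {x : Euc N | r₀ ≤ ‖x - y‖} := isClosed_le (by fun_prop) (by fun_prop)
    exact fun x hx => closure_minimal (fun z hz => (hy z hz).le) hcl hx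
  have hw0 : ∀ x ∈ closure Ω, 0 ≤ w x := by
    intro x hx
    have h1 : r₀ ^ 2 ≤ ‖x - y‖ ^ 2 := pow_le_pow_left₀ hr₀.le (hycl x hx) 2
    have h2 : Real.exp (-lam * ‖x - y‖ ^ 2) ≤ Real.exp (-lam * r₀ ^ 2) :=
      Real.exp_le_exp.2 (by nlinarith)
    exact mul_nonneg (by positivity) (sub_nonneg.2 h2)
  have hwM : ∀ x, r₀ + 1 ≤ ‖x - y‖ → M ≤ w x := by
    intro x hx
    have h1 : (r₀ + 1) ^ 2 ≤ ‖x - y‖ ^ 2 := pow_le_pow_left₀ (by linarith) hx 2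
    have h2 : Real.exp (-lam * ‖x - y‖ ^ 2) ≤ Real.exp (-lam * (r₀ + 1) ^ 2) :=
      Real.exp_le_exp.2 (by nlinarith)
    refine hK1.trans (mul_le_mul_of_nonneg_left ?_ (by positivity))
    linarith
  have huMcl : ∀ x ∈ closure Ω, u x ≤ Mu := fun x hx => by
    have h : MapsTo u Ω (Iic Mu) := huM
    simpa using h.closure_of_continuousOn hu hx
  intro x₁ hx₁
  refine le_of_forall_pos_le_add fun ε hε => ?_
  by_contra hcon
  push Not at hcon
  set S : Set (Euc N) := {x ∈ closure Ω | ε ≤ u x - w x} with hS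
  have hScl : IsClosed S := by
    have := (hu.sub hwc.continuous.continuousOn).preimage_isClosed_of_isClosed isClosed_closure
      (isClosed_Ici (a := ε))
    exact this
  have hSnear : ∀ x ∈ S, ‖x - y‖ < r₀ + 1 := by
    intro x hx
    by_contra h
    have := hwM x (not_lt.1 h)
    have := huMcl x hx.1
    linarith [hx.2]
  have hSc : IsCompact S := by
    refine (isCompact_closedBall y (r₀ + 1)).of_isClosed_subset hScl fun x hx => ?_
    rw [mem_closedBall, dist_eq_norm]
    exact (hSnear x hx).le
  have hSΩ : S ⊆ Ω := by
    intro x hx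
    by_contra h
    have hfr : x ∈ frontier Ω := ⟨hx.1, fun h' => h (interior_subset h')⟩
    have := hb x hfr
    have := hw0 x hx.1
    linarith [hx.2]
  set φ : Euc N → ℝ := fun x => if x ∈ Ω then max (u x - w x - ε) 0 ^ 2 else 0 with hφdef
  have hφS : ∀ x ∉ S, φ x = 0 := by
    intro x hx
    simp only [hφdef]
    split_ifs with h
    · have : u x - w x < ε := by
        by_contra h'
        exact hx ⟨subset_closure h, not_lt.1 h'⟩
      rw [max_eq_right (by linarith)]; simp
    · rfl
  have hts : tsupport φ ⊆ S := closure_minimal (fun x hx => by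
    by_contra h; exact hx (hφS x h)) hScl
  have hφc : HasCompactSupport φ := HasCompactSupport.intro hSc hφS
  have hφΩ : ∀ x ∈ Ω, φ =ᶠ[𝓝 x] fun x => max (u x - w x - ε) 0 ^ 2 := by
    intro x hx
    filter_upwards [hΩ.mem_nhds hx] with z hz
    simp [hφdef, hz]
  have hu1at : ∀ x ∈ Ω, ContDiffAt ℝ 1 u x := fun x hx => hu1.contDiffAt (hΩ.mem_nhds hx)
  have hφ1 : ContDiff ℝ 1 φ := by
    refine contDiff_iff_contDiffAt.2 fun x => ?_
    by_cases hx : x ∉ tsupport φ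
    · exact contDiffAt_const.congr_of_eventuallyEq (notMem_tsupport_iff_eventuallyEq.1 hx)
    rw [not_not] at hx
    have hxΩ := hSΩ (hts hx)
    refine ContDiffAt.congr_of_eventuallyEq ?_ (hφΩ x hxΩ)
    exact contDiff_max_zero_sq.contDiffAt.comp x
      (((hu1at x hxΩ).sub hwc.contDiffAt).sub contDiffAt_const)
  have hφn : ∀ x, 0 ≤ φ x := by
    intro x
    simp only [hφdef]
    split_ifs <;> positivity
  have hφd : ∀ x ∈ Ω, ∀ v, fderiv ℝ φ x v
      = 2 * max (u x - w x - ε) 0 * ⟪gradient u x - gradient w x, v⟫ := by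
    intro x hx v
    have hud : HasGradientAt u (gradient u x) x :=
      ((hu1at x hx).differentiableAt one_ne_zero).hasGradientAt
    have hwd : HasGradientAt w (gradient w x) x :=
      (hwc.contDiffAt.differentiableAt one_ne_zero).hasGradientAt
    rw [hasGradientAt_iff_hasFDerivAt] at hud hwd
    have h := (hasDerivAt_max_zero_sq (u x - w x - ε)).comp_hasFDerivAt x
      ((hud.sub hwd).sub_const ε)
    rw [(h.congr_of_eventuallyEq (hφΩ x hx)).fderiv]
    simp [inner_sub_left]
  have hgu : ContinuousOn (gradient u) Ω := by
    have : ContinuousOn (fderiv ℝ u) Ω := hu1.continuousOn_fderiv_of_isOpen hΩ le_rfl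
    exact (InnerProductSpace.toDual ℝ (Euc N)).symm.continuous.comp_continuousOn this
  have hgw : Continuous (gradient w) :=
    (InnerProductSpace.toDual ℝ (Euc N)).symm.continuous.comp (hwc.continuous_fderiv one_ne_zero)
  have hVu : ContinuousOn (fun x => ‖gradient u x‖ ^ (m - 2) • gradient u x) Ω :=
    (hgu.norm.rpow_const fun x _ => Or.inr (by linarith)).smul hgu
  have hVw : ContinuousOn (fun x => ‖gradient w x‖ ^ (m - 2) • gradient w x) Ω :=
    ((hgw.norm.rpow_const fun x => Or.inr (by linarith)).smul hgw).continuousOn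
  have hyS : y ∉ tsupport φ := by
    intro h
    have := hy y (hSΩ (hts h))
    simp at this
    linarith
  have E1 : ∫ x, fderiv ℝ φ x (‖gradient u x‖ ^ (m - 2) • gradient u x) = ∫ x, f x * φ x := by
    refine weak_form_C1 hΩ hVu hf (fun ψ hψ => ?_) hφ1 hφc (hts.trans hSΩ)
    rw [← hsol ψ hψ]
    congr 1
    ext x
    rw [map_smul, smul_eq_mul, real_inner_comm]
    congr 1
    simp [gradient]
  have E2 : ∫ x, fderiv ℝ φ x (‖gradient w x‖ ^ (m - 2) • gradient w x)
      = ∫ x, barrierRHS N K lam m (‖x - y‖ ^ 2) * φ x := barrier_weak hK hl.ne' hφ1 hφc hyS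
  have hdφ0 : ∀ x ∉ S, fderiv ℝ φ x = 0 := fun x hx =>
    image_eq_zero_of_notMem_tsupport (fun h => hx (hts (tsupport_fderiv_subset ℝ h)))
  have hdc := hφ1.continuous_fderiv one_ne_zero
  have I1 : Integrable fun x => fderiv ℝ φ x (‖gradient u x‖ ^ (m - 2) • gradient u x) :=
    integrable_of_tsupport hΩ hSc hSΩ (hdc.continuousOn.clm_apply hVu)
      fun x hx => by simp [hdφ0 x hx]
  have I2 : Integrable fun x => fderiv ℝ φ x (‖gradient w x‖ ^ (m - 2) • gradient w x) :=
    integrable_of_tsupport hΩ hSc hSΩ (hdc.continuousOn.clm_apply hVw)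
      fun x hx => by simp [hdφ0 x hx]
  have I3 : Integrable fun x => f x * φ x :=
    integrable_of_tsupport hΩ hSc hSΩ (hf.mul hφ1.continuous.continuousOn)
      fun x hx => by simp [hφS x hx]
  have I4 : Integrable fun x => barrierRHS N K lam m (‖x - y‖ ^ 2) * φ x := by
    refine integrable_of_tsupport hΩ hSc hSΩ (ContinuousOn.mul ?_ hφ1.continuous.continuousOn)
      fun x hx => by simp [hφS x hx]
    refine ContinuousOn.mul ?_ (by fun_prop)
    refine (continuousOn_fluxProfile K lam m).comp (by fun_prop) fun x hx => ?_
    have := hr₀.trans (hy x hx)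
    exact pow_pos this 2
  have hmono : 0 ≤ ∫ x, (fderiv ℝ φ x (‖gradient u x‖ ^ (m - 2) • gradient u x)
      - fderiv ℝ φ x (‖gradient w x‖ ^ (m - 2) • gradient w x)) := by
    refine integral_nonneg fun x => ?_
    by_cases hx : x ∈ S
    · simp only [Pi.zero_apply]
      rw [← map_sub, hφd x (hSΩ hx)]
      exact mul_nonneg (mul_nonneg two_pos.le (le_max_right _ _))
        (pLaplace_monotone (by linarith) _ _)
    · simp [hdφ0 x hx]
  rw [integral_sub I1 I2, E1, E2, ← integral_sub I3 I4] at hmono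
  have hφi : Integrable φ := hφ1.continuous.integrable_of_hasCompactSupport hφc
  have hle : ∫ x, (f x * φ x - barrierRHS N K lam m (‖x - y‖ ^ 2) * φ x)
      ≤ ∫ x, (Mf - M) * φ x := by
    refine integral_mono (I3.sub I4) (hφi.const_mul _) fun x => ?_
    by_cases hx : x ∈ S
    · have h1 := hfM x (hSΩ hx)
      have h2 := hK2 (‖x - y‖ ^ 2) (pow_le_pow_left₀ hr₀.le (hycl x hx.1) 2)
        (pow_le_pow_left₀ (norm_nonneg _) (hSnear x hx).le 2)
      have := hφn x
      simp only
      nlinarith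
    · simp [hφS x hx]
  have hpos : 0 < ∫ x, φ x := by
    refine hφ1.continuous.integral_pos_of_hasCompactSupport_nonneg_nonzero hφc hφn (x := x₁) ?_
    simp only [hφdef, hx₁, if_true]
    rw [max_eq_left (by linarith)]
    have : 0 < u x₁ - w x₁ - ε := by linarith
    positivity
  rw [integral_const_mul] at hle
  nlinarith

/-! ### The boundary estimate -/

/-- Lemma 2.1 of the paper: uniform boundary Lipschitz estimate under the
uniform exterior sphere condition, with constant depending only on `m`, `N`, `r₀` and `M`. -/
theorem boundary_lipschitz_estimate
    (N : ℕ) (hN : 1 ≤ N) (m r₀ M : ℝ) (hm : 2 < m) (hr₀ : 0 < r₀) (hM : 0 < M) :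
    ∃ C : ℝ, 0 < C ∧
      ∀ (Ω : Set (Euc N)) (u f : Euc N → ℝ) (α Mu Mf : ℝ),
        IsOpen Ω → UnifExtSphere Ω r₀ → α ∈ Set.Ioo (0 : ℝ) 1 →
        ContinuousOn u (closure Ω) →
        ContDiffOn ℝ 1 u Ω →
        (∀ x ∈ Ω, ∃ ε > (0 : ℝ), ∃ Cα : ℝ, ∀ y ∈ Metric.ball x ε ∩ Ω, ∀ z ∈ Metric.ball x ε ∩ Ω,
          ‖gradient u y - gradient u z‖ ≤ Cα * dist y z ^ α) →
        ContinuousOn f (closure Ω) →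
        (∀ x ∈ Ω, |u x| ≤ Mu) → (∀ x ∈ Ω, |f x| ≤ Mf) → Mu + Mf < M →
        (∀ x ∈ frontier Ω, u x = 0) →
        IsWeakSolRHS Ω m f u →
        ∀ x0 ∈ frontier Ω, ∀ x ∈ Ω ∩ Metric.ball x0 1,
          |u x - u x0| ≤ C * ‖x - x0‖ := by
  classical
  have hm1 : 0 < m - 1 := by linarith
  have hN0 : (0 : ℝ) ≤ N := Nat.cast_nonneg N
  -- this choice of `lam` gives `2 lam (m - 1) s - (m - 2) - N ≥ 1` for `s ≥ r₀²`
  set lam : ℝ := (N + m - 1) / (2 * (m - 1) * r₀ ^ 2) with hlam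
  have hl : 0 < lam := div_pos (by linarith) (by positivity)
  have hlr : 2 * lam * (m - 1) * r₀ ^ 2 = N + m - 1 := by
    rw [hlam]; field_simp
  set D₁ : ℝ := (Real.exp (-lam * r₀ ^ 2) - Real.exp (-lam * (r₀ + 1) ^ 2)) / (2 * lam) with hD₁
  have hD₁pos : 0 < D₁ := by
    refine div_pos (sub_pos.2 (Real.exp_lt_exp.2 ?_)) (by positivity)
    nlinarith
  set D₂ : ℝ := Real.exp (-lam * (m - 1) * (r₀ + 1) ^ 2) * (r₀ ^ 2) ^ ((m - 2) / 2) with hD₂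
  have hD₂pos : 0 < D₂ := by positivity
  set K : ℝ := max 1 (max (M / D₁) (M / D₂)) with hKdef
  have hK1 : 1 ≤ K := le_max_left _ _
  have hK : 0 < K := by linarith
  have hKD₁ : M ≤ K * D₁ :=
    (div_le_iff₀ hD₁pos).1 ((le_max_left _ _).trans (le_max_right _ _))
  have hKD₂ : M ≤ K * D₂ :=
    (div_le_iff₀ hD₂pos).1 ((le_max_right _ _).trans (le_max_right _ _))
  have hcond1 : M ≤ K / (2 * lam) *
      (Real.exp (-lam * r₀ ^ 2) - Real.exp (-lam * (r₀ + 1) ^ 2)) := by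
    refine hKD₁.trans (le_of_eq ?_)
    rw [hD₁]; ring
  have hcond2 : ∀ s, r₀ ^ 2 ≤ s → s ≤ (r₀ + 1) ^ 2 → M ≤ barrierRHS N K lam m s := by
    intro s hs1 hs2
    have hfac : 1 ≤ 2 * lam * (m - 1) * s - (m - 2) - N := by
      have : 2 * lam * (m - 1) * r₀ ^ 2 ≤ 2 * lam * (m - 1) * s := by gcongr
      linarith
    have hKm : K ≤ K ^ (m - 1) := by
      conv_lhs => rw [← Real.rpow_one K]
      exact Real.rpow_le_rpow_of_exponent_le hK1 (by linarith)
    have hexp : Real.exp (-lam * (m - 1) * (r₀ + 1) ^ 2) ≤ Real.exp (-lam * (m - 1) * s) := by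
      refine Real.exp_le_exp.2 ?_
      have : lam * (m - 1) * s ≤ lam * (m - 1) * (r₀ + 1) ^ 2 := by gcongr
      linarith
    have hpow : (r₀ ^ 2) ^ ((m - 2) / 2) ≤ s ^ ((m - 2) / 2) :=
      Real.rpow_le_rpow (by positivity) hs1 (by linarith)
    have hflux : K * D₂ ≤ fluxProfile K lam m s := by
      unfold fluxProfile
      rw [hD₂, ← mul_assoc]
      gcongr
    have h0 : 0 ≤ fluxProfile K lam m s := by
      linarith
    exact (hKD₂.trans hflux).trans (le_mul_of_one_le_right h0 hfac)
  refine ⟨K / 2 * (2 * r₀ + 1), by positivity, ?_⟩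
  intro Ω u f α Mu Mf hΩ hext _ hu hu1 _ hf huM hfM hsum hb hsol x₀ hx₀ x hx
  obtain ⟨y, -, hy⟩ := hext x₀ hx₀
  have hx₀Ω : x₀ ∉ Ω := by
    rw [hΩ.frontier_eq] at hx₀
    exact hx₀.2
  have hx₀y : ‖x₀ - y‖ ≤ r₀ := by
    have : x₀ ∈ closedBall y r₀ ∩ closure Ω := by rw [hy]; rfl
    simpa [dist_eq_norm] using this.1
  have hyΩ : ∀ z ∈ Ω, r₀ < ‖z - y‖ := by
    intro z hz
    by_contra h
    have : z ∈ closedBall y r₀ ∩ closure Ω :=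
      ⟨by rw [mem_closedBall, dist_eq_norm]; exact not_lt.1 h, subset_closure hz⟩
    rw [hy, mem_singleton_iff] at this
    exact hx₀Ω (this ▸ hz)
  have hMu0 : 0 ≤ Mu := (abs_nonneg _).trans (huM x hx.1)
  have hMf0 : 0 ≤ Mf := (abs_nonneg _).trans (hfM x hx.1)
  have hup : u x ≤ barrier K lam r₀ y x :=
    le_barrier hm hr₀ hK hl hΩ hu hu1 (hf.mono subset_closure)
      (fun z hz => (le_abs_self _).trans (huM z hz))
      (fun z hz => (le_abs_self _).trans (hfM z hz)) (by linarith) (by linarith) hb hsol hyΩ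
      hcond1 hcond2 x hx.1
  have hsol' : IsWeakSolRHS Ω m (-f) (-u) := by
    intro φ hφ
    have hg : ∀ z, gradient (-u) z = -gradient u z := fun z => by rw [gradient, fderiv_neg, map_neg]; rfl
    simp only [hg, norm_neg, inner_neg_left, mul_neg, Pi.neg_apply, neg_mul, integral_neg]
    rw [hsol φ hφ]
  have hlow : (-u) x ≤ barrier K lam r₀ y x :=
    le_barrier hm hr₀ hK hl hΩ hu.neg hu1.neg (hf.mono subset_closure).neg
      (fun z hz => (neg_le_abs _).trans (huM z hz))
      (fun z hz => (neg_le_abs _).trans (hfM z hz)) (by linarith) (by linarith)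
      (fun z hz => by simp [hb z hz]) hsol' hyΩ hcond1 hcond2 x hx.1
  have hbar : barrier K lam r₀ y x ≤ K / 2 * (2 * r₀ + 1) * ‖x - x₀‖ := by
    have hx1 : ‖x - x₀‖ < 1 := by simpa [dist_eq_norm] using hx.2
    have htri : ‖x - y‖ ≤ ‖x - x₀‖ + ‖x₀ - y‖ := norm_sub_le_norm_sub_add_norm_sub _ _ _
    have hr := hyΩ x hx.1
    have hs : ‖x - y‖ ^ 2 - r₀ ^ 2 ≤ (2 * r₀ + 1) * ‖x - x₀‖ := by
      have h1 : ‖x - y‖ - r₀ ≤ ‖x - x₀‖ := by linarith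
      have h2 : ‖x - y‖ + r₀ ≤ 2 * r₀ + 1 := by linarith
      nlinarith [norm_nonneg (x - x₀)]
    -- `e^{-a} - e^{-b} = e^{-a} (1 - e^{-(b - a)}) ≤ b - a` for `0 ≤ a ≤ b`
    have hexp : Real.exp (-lam * r₀ ^ 2) - Real.exp (-lam * ‖x - y‖ ^ 2)
        ≤ lam * (‖x - y‖ ^ 2 - r₀ ^ 2) := by
      have h1 : Real.exp (-lam * ‖x - y‖ ^ 2)
          = Real.exp (-lam * r₀ ^ 2) * Real.exp (-(lam * (‖x - y‖ ^ 2 - r₀ ^ 2))) := by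
        rw [← Real.exp_add]; congr 1; ring
      have h2 := Real.add_one_le_exp (-(lam * (‖x - y‖ ^ 2 - r₀ ^ 2)))
      have h3 : Real.exp (-lam * r₀ ^ 2) ≤ 1 := Real.exp_le_one_iff.2 (by nlinarith [sq_nonneg r₀])
      have h4 := Real.exp_pos (-lam * r₀ ^ 2)
      have h5 : 0 ≤ lam * (‖x - y‖ ^ 2 - r₀ ^ 2) := by
        have : r₀ ^ 2 ≤ ‖x - y‖ ^ 2 := pow_le_pow_left₀ hr₀.le hr.le 2
        exact mul_nonneg hl.le (by linarith)
      rw [h1]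
      nlinarith
    calc barrier K lam r₀ y x
        ≤ K / (2 * lam) * (lam * (‖x - y‖ ^ 2 - r₀ ^ 2)) :=
          mul_le_mul_of_nonneg_left hexp (by positivity)
      _ = K / 2 * (‖x - y‖ ^ 2 - r₀ ^ 2) := by field_simp
      _ ≤ K / 2 * ((2 * r₀ + 1) * ‖x - x₀‖) := mul_le_mul_of_nonneg_left hs (by positivity)
      _ = K / 2 * (2 * r₀ + 1) * ‖x - x₀‖ := by ring
  rw [hb x₀ hx₀, sub_zero, abs_le]
  simp only [Pi.neg_apply] at hlow
  constructor <;> linarith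
end
end

section
/- Let 2 < m < p, let λ > 0 and μ > 0, and let Ω ⊆ ℝ^N be an open bounded connected set. Let u, v ∈ W^{1,m}_0(Ω) be two distinct positive weak solutions of -Δ_m w = λ w^{m-1} + μ w^{p-1} in Ω with zero Dirichlet data. Then both sets {x ∈ Ω : u(x) > v(x)} and {x ∈ Ω : u(x) < v(x)} have positive Lebesgue measure; in other words, the difference u - v must change sign in Ω. -/
/-!
Suppose `u ≤ v` almost everywhere on `Ω`; the claim is that then `u = v` almost everywhere
(`ae_eq_of_ae_le`), and the theorem follows by symmetry. Testing the equation of `v` with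
`u^m / v^(m-1)` and using Picone's inequality gives (`picone_integral`)
`∫ (λ + μ v^(p-m)) u^m ≤ ∫ |∇u|^m`.
Testing the equation of `u` with `u` gives (`energy_le`)
`∫ |∇u|^m ≤ ∫ (λ + μ u^(p-m)) u^m`.
Since `u ≤ v`, `μ > 0`, `p > m` and `u > 0`, the two inequalities force `u^(p-m) = v^(p-m)`.

The weak formulation allows only smooth compactly supported test functions, so both test functions
are reached by approximation. A positive element of `W^{1,m}_0(Ω)` has an approximating sequence of
test functions that converges almost everywhere with its gradients under an integrable bound
(`exists_approx`); this extends the equation to test functions `Φ · b(v)` with `Φ` a test function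
and `b` smooth, bounded and of bounded derivative (`weak_form_mul_comp`). Picone's inequality is
applied with smooth regularisations of `s ↦ |s|^m` and `t ↦ t^(1-m)`, and the energy estimate with
smooth truncations of the identity.

No growth restriction is placed on `p`, so the right-hand side of the weak formulation might be the
junk value `0` of a divergent integral. This is excluded by `integrableOn_source`: otherwise the
flux would be orthogonal to the gradient of every test function, and `u` would have zero energy,
contradicting `integral_gradient_rpow_ne_zero`.
-/


open MeasureTheory Filter Metric Set
open scoped ENNReal NNReal RealInnerProductSpace Topology

noncomputable section

variable {N : ℕ}

/-! ### Gradients and test functions -/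

lemma measurable_gradient' (u : Euc N → ℝ) : Measurable (gradient u) := by
  unfold gradient
  exact (LinearIsometryEquiv.continuous _).measurable.comp (measurable_fderiv ℝ u)

lemma gradient_comp {a : ℝ → ℝ} {φ : Euc N → ℝ} (ha : Differentiable ℝ a)
    (hφ : Differentiable ℝ φ) (x : Euc N) :
    gradient (fun y => a (φ y)) x = deriv a (φ x) • gradient φ x := by
  have h : HasFDerivAt (fun y => a (φ y)) (deriv a (φ x) • fderiv ℝ φ x) x :=
    (ha (φ x)).hasDerivAt.comp_hasFDerivAt x (hφ x).hasFDerivAt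
  unfold gradient
  rw [h.fderiv]
  simp

lemma gradient_mul_comp {b : ℝ → ℝ} {Φ ψ : Euc N → ℝ} (hb : Differentiable ℝ b)
    (hΦ : Differentiable ℝ Φ) (hψ : Differentiable ℝ ψ) (x : Euc N) :
    gradient (fun y => Φ y * b (ψ y)) x
      = b (ψ x) • gradient Φ x + (Φ x * deriv b (ψ x)) • gradient ψ x := by
  have h1 : HasFDerivAt (fun y => b (ψ y)) (deriv b (ψ x) • fderiv ℝ ψ x) x :=
    (hb (ψ x)).hasDerivAt.comp_hasFDerivAt x (hψ x).hasFDerivAt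
  have h := (hΦ x).hasFDerivAt.mul h1
  unfold gradient
  have h2 : fderiv ℝ (fun y => Φ y * b (ψ y)) x = _ := h.fderiv
  rw [h2]
  simp only [map_add, map_smulₛₗ, smul_smul, conj_trivial]
  rw [add_comm]

namespace IsTestFun

variable {Ω : Set (Euc N)} {φ ψ : Euc N → ℝ}

lemma differentiable (h : IsTestFun Ω φ) : Differentiable ℝ φ :=
  h.1.differentiable (by simp)

lemma continuous_gradient (h : IsTestFun Ω φ) : Continuous (gradient φ) := by
  unfold gradient
  exact (LinearIsometryEquiv.continuous _).comp (h.1.continuous_fderiv (by simp))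

lemma gradient_eq_zero (_ : IsTestFun Ω φ) {x : Euc N} (hx : x ∉ tsupport φ) :
    gradient φ x = 0 := by
  unfold gradient
  rw [fderiv_of_notMem_tsupport (𝕜 := ℝ) hx, map_zero]

lemma eq_zero_off (h : IsTestFun Ω φ) {x : Euc N} (hx : x ∉ Ω) : φ x = 0 :=
  image_eq_zero_of_notMem_tsupport fun hx' => hx (h.2.2 hx')

lemma gradient_eq_zero_off (h : IsTestFun Ω φ) {x : Euc N} (hx : x ∉ Ω) :
    gradient φ x = 0 :=
  h.gradient_eq_zero fun hx' => hx (h.2.2 hx')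

lemma hasCompactSupport_gradient (h : IsTestFun Ω φ) : HasCompactSupport (gradient φ) :=
  HasCompactSupport.intro h.2.1 fun _ hx => h.gradient_eq_zero hx

lemma exists_bound (h : IsTestFun Ω φ) : ∃ M, 0 ≤ M ∧ ∀ x, |φ x| ≤ M := by
  obtain ⟨M, hM⟩ := h.2.1.exists_bound_of_continuous h.1.continuous
  exact ⟨M, (norm_nonneg _).trans (hM 0), hM⟩

lemma integrable_abs_rpow (h : IsTestFun Ω φ) {m : ℝ} (hm : 0 < m) :
    Integrable (fun x => |φ x| ^ m) := by
  refine Continuous.integrable_of_hasCompactSupport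
    (h.1.continuous.abs.rpow_const fun _ => Or.inr hm.le) ?_
  exact HasCompactSupport.intro h.2.1 fun x hx => by
    simp [image_eq_zero_of_notMem_tsupport hx, Real.zero_rpow hm.ne']

lemma integrable_gradient_rpow (h : IsTestFun Ω φ) {m : ℝ} (hm : 0 < m) :
    Integrable (fun x => ‖gradient φ x‖ ^ m) := by
  refine Continuous.integrable_of_hasCompactSupport
    (h.continuous_gradient.norm.rpow_const fun _ => Or.inr hm.le) ?_
  exact HasCompactSupport.intro h.2.1 fun x hx => by
    simp [h.gradient_eq_zero hx, Real.zero_rpow hm.ne']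

lemma mul_smooth (h : IsTestFun Ω φ) (hψ : ContDiff ℝ (⊤ : ℕ∞) ψ) :
    IsTestFun Ω (fun x => φ x * ψ x) :=
  ⟨h.1.mul hψ, h.2.1.mul_right, (tsupport_mul_subset_left).trans h.2.2⟩

lemma add (h : IsTestFun Ω φ) (hψ : IsTestFun Ω ψ) : IsTestFun Ω (fun x => φ x + ψ x) :=
  ⟨h.1.add hψ.1, h.2.1.add hψ.2.1,
    (tsupport_add φ ψ).trans (union_subset h.2.2 hψ.2.2)⟩

lemma comp_left (h : IsTestFun Ω φ) {a : ℝ → ℝ} (ha : ContDiff ℝ (⊤ : ℕ∞) a) (ha0 : a 0 = 0) :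
    IsTestFun Ω (fun x => a (φ x)) :=
  ⟨ha.comp h.1, h.2.1.comp_left ha0,
    (closure_mono (Function.support_comp_subset ha0 φ)).trans h.2.2⟩

end IsTestFun

/-! ### Approximating sequences -/

lemma add_rpow_le_two_rpow {x y m : ℝ} (hx : 0 ≤ x) (hy : 0 ≤ y) (hm : 0 ≤ m) :
    (x + y) ^ m ≤ 2 ^ m * (x ^ m + y ^ m) := by
  have h1 : (x + y) ^ m ≤ (2 * max x y) ^ m := by
    apply Real.rpow_le_rpow (by positivity) _ hm
    linarith [le_max_left x y, le_max_right x y]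
  rw [Real.mul_rpow (by norm_num) (hx.trans (le_max_left _ _))] at h1
  refine h1.trans (mul_le_mul_of_nonneg_left ?_ (by positivity))
  have hx' := Real.rpow_nonneg hx m
  have hy' := Real.rpow_nonneg hy m
  rcases max_cases x y with ⟨h, _⟩ | ⟨h, _⟩ <;> rw [h] <;> linarith

/-- A weak form of Young's inequality, used to build integrable dominating functions. -/
lemma rpow_mul_le_add {x y m : ℝ} (hx : 0 ≤ x) (hy : 0 ≤ y) (hm : 1 < m) :
    x ^ (m - 1) * y ≤ x ^ m + y ^ m := by
  have hx' := Real.rpow_nonneg hx m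
  have hy' := Real.rpow_nonneg hy m
  have key : ∀ z : ℝ, 0 ≤ z → z ^ (m - 1) * z = z ^ m := fun z hz => by
    rw [← Real.rpow_add_one' hz (by linarith)]; ring_nf
  rcases le_total x y with h | h
  · calc x ^ (m - 1) * y ≤ y ^ (m - 1) * y := by
          gcongr
      _ = y ^ m := key y hy
      _ ≤ _ := by linarith
  · calc x ^ (m - 1) * y ≤ x ^ (m - 1) * x := by gcongr
      _ = x ^ m := key x hx
      _ ≤ _ := by linarith

lemma norm_sub_rpow_le {E : Type*} [SeminormedAddCommGroup E] (a b : E) {m : ℝ} (hm : 0 ≤ m) :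
    ‖a - b‖ ^ m ≤ 2 ^ m * (‖a‖ ^ m + ‖b‖ ^ m) :=
  (Real.rpow_le_rpow (norm_nonneg _) (norm_sub_le a b) hm).trans
    (add_rpow_le_two_rpow (norm_nonneg _) (norm_nonneg _) hm)

lemma aemeasurable_of_pos {Ω : Set (Euc N)} {m : ℝ} {u : Euc N → ℝ} (hm : 0 < m)
    (hu : MemW1m0 Ω m u) (hpos : PosOn Ω u) : AEMeasurable u (volume.restrict Ω) := by
  refine (hu.1.aestronglyMeasurable.aemeasurable.pow_const (1 / m)).congr ?_
  filter_upwards [hpos] with x hx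
  rw [abs_of_pos hx, ← Real.rpow_mul hx.le, mul_one_div_cancel hm.ne', Real.rpow_one]

/-- A positive element of `W^{1,m}_0(Ω)` is the limit almost everywhere, together with its
gradient, of test functions whose `m`-th powers are dominated by one integrable function.
The terms of a sufficiently fast converging sequence are dominated by the sum of the series of
all the errors. -/
lemma exists_approx {Ω : Set (Euc N)} {m : ℝ} {u : Euc N → ℝ} (hm : 0 < m)
    (hu : MemW1m0 Ω m u) (hpos : PosOn Ω u) :
    ∃ (φ : ℕ → Euc N → ℝ) (D : Euc N → ℝ), (∀ k, IsTestFun Ω (φ k)) ∧ IntegrableOn D Ω ∧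
      ∀ᵐ x ∂(volume.restrict Ω), 0 ≤ D x ∧
        (∀ k, |φ k x| ^ m ≤ D x ∧ ‖gradient (φ k) x‖ ^ m ≤ D x) ∧
        Tendsto (fun k => φ k x) atTop (𝓝 (u x)) ∧
        Tendsto (fun k => gradient (φ k) x) atTop (𝓝 (gradient u x)) := by
  have hum := aemeasurable_of_pos hm hu hpos
  obtain ⟨hu1, hu2, hu3⟩ := hu
  choose φ hφ hφe using fun k : ℕ => hu3 ((1 / 2) ^ k) (by positivity)
  set e : ℕ → Euc N → ℝ := fun k x =>
    |u x - φ k x| ^ m + ‖gradient u x - gradient (φ k) x‖ ^ m with he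
  have hi1 : ∀ k, IntegrableOn (fun x => |u x - φ k x| ^ m) Ω := fun k => by
    refine ((hu1.add ((hφ k).integrable_abs_rpow hm).integrableOn).const_mul (2 ^ m)).mono'
      ((hum.sub (hφ k).1.continuous.aemeasurable).abs.pow_const m).aestronglyMeasurable ?_
    filter_upwards with x
    rw [Real.norm_of_nonneg (by positivity)]
    exact norm_sub_rpow_le (u x) (φ k x) hm.le
  have hi2 : ∀ k, IntegrableOn (fun x => ‖gradient u x - gradient (φ k) x‖ ^ m) Ω := fun k => by
    refine ((hu2.add ((hφ k).integrable_gradient_rpow hm).integrableOn).const_mul (2 ^ m)).mono'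
      ((((measurable_gradient' u).sub (measurable_gradient' (φ k))).norm.pow_const
        m).aestronglyMeasurable) ?_
    filter_upwards with x
    rw [Real.norm_of_nonneg (by positivity)]
    exact norm_sub_rpow_le (gradient u x) (gradient (φ k) x) hm.le
  have hie : ∀ k, IntegrableOn (e k) Ω := fun k => (hi1 k).add (hi2 k)
  have he0 : ∀ k x, 0 ≤ e k x := fun k x => by simp only [he]; positivity
  have hm1 : ∀ k, AEMeasurable (fun x => ENNReal.ofReal (e k x)) (volume.restrict Ω) :=
    fun k => (hie k).aestronglyMeasurable.aemeasurable.ennreal_ofReal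
  set T : Euc N → ℝ≥0∞ := fun x => ∑' k, ENNReal.ofReal (e k x) with hT
  have hTm : AEMeasurable T (volume.restrict Ω) := AEMeasurable.tsum hm1
  have hTf : ∫⁻ x in Ω, T x ≠ ⊤ := by
    rw [hT, lintegral_tsum hm1]
    have hle : ∀ k, ∫⁻ x in Ω, ENNReal.ofReal (e k x) ≤ ENNReal.ofReal ((1 / 2) ^ k) := fun k => by
      rw [← ofReal_integral_eq_lintegral_ofReal (hie k) (Eventually.of_forall (he0 k))]
      apply ENNReal.ofReal_le_ofReal
      have := integral_add (hi1 k) (hi2 k)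
      simp only [he]
      rw [this]
      exact (hφe k).le
    refine ne_top_of_le_ne_top ?_ (ENNReal.tsum_le_tsum hle)
    rw [← ENNReal.ofReal_tsum_of_nonneg (fun _ => by positivity) summable_geometric_two]
    exact ENNReal.ofReal_ne_top
  have hTi : IntegrableOn (fun x => (T x).toReal) Ω :=
    integrable_toReal_of_lintegral_ne_top hTm hTf
  refine ⟨φ, fun x => 2 ^ m * ((|u x| ^ m + ‖gradient u x‖ ^ m) + (T x).toReal), hφ,
    ((hu1.add hu2).add hTi).const_mul _, ?_⟩
  filter_upwards [ae_lt_top' hTm hTf] with x hx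
  have hle : ∀ k, e k x ≤ (T x).toReal := fun k => by
    rw [← ENNReal.toReal_ofReal (he0 k x)]
    exact ENNReal.toReal_mono hx.ne (ENNReal.le_tsum k)
  have hto : Tendsto (fun k => e k x) atTop (𝓝 0) := by
    have h := ENNReal.tendsto_atTop_zero_of_tsum_ne_top hx.ne
    have h2 := (ENNReal.tendsto_toReal ENNReal.zero_ne_top).comp h
    simpa [Function.comp_def, ENNReal.toReal_ofReal (he0 _ x)] using h2
  have root : ∀ (z : ℕ → ℝ), (∀ k, 0 ≤ z k) → (∀ k, z k ^ m ≤ e k x) →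
      Tendsto z atTop (𝓝 0) := fun z hz hze => by
    have h1 : Tendsto (fun k => z k ^ m) atTop (𝓝 0) :=
      squeeze_zero (fun k => Real.rpow_nonneg (hz k) m) hze hto
    have h2 := h1.rpow_const (p := 1 / m) (Or.inr (by positivity))
    rw [Real.zero_rpow (by positivity)] at h2
    refine h2.congr fun k => ?_
    rw [← Real.rpow_mul (hz k), mul_one_div_cancel hm.ne', Real.rpow_one]
  have hT0 : 0 ≤ (T x).toReal := ENNReal.toReal_nonneg
  have hp1 : 0 ≤ |u x| ^ m := by positivity
  have hp2 : 0 ≤ ‖gradient u x‖ ^ m := by positivity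
  refine ⟨by positivity, fun k => ⟨?_, ?_⟩, ?_, ?_⟩
  · have h := norm_sub_rpow_le (u x) (u x - φ k x) hm.le
    rw [sub_sub_cancel] at h
    refine h.trans (mul_le_mul_of_nonneg_left ?_ (by positivity))
    have := hle k
    have : 0 ≤ ‖gradient u x - gradient (φ k) x‖ ^ m := by positivity
    simp only [he, Real.norm_eq_abs] at *
    linarith
  · have h := norm_sub_rpow_le (gradient u x) (gradient u x - gradient (φ k) x) hm.le
    rw [sub_sub_cancel] at h
    refine h.trans (mul_le_mul_of_nonneg_left ?_ (by positivity))
    have := hle k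
    have : 0 ≤ |u x - φ k x| ^ m := by positivity
    simp only [he] at *
    linarith
  · have h := root (fun k => |u x - φ k x|) (fun _ => abs_nonneg _) fun k => by
      simp only [he]; linarith [Real.rpow_nonneg (norm_nonneg (gradient u x - gradient (φ k) x)) m]
    rw [tendsto_iff_norm_sub_tendsto_zero]
    exact h.congr fun k => by rw [abs_sub_comm, Real.norm_eq_abs]
  · have h := root (fun k => ‖gradient u x - gradient (φ k) x‖) (fun _ => norm_nonneg _) fun k => by
      simp only [he]; linarith [Real.rpow_nonneg (abs_nonneg (u x - φ k x)) m]
    rw [tendsto_iff_norm_sub_tendsto_zero]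
    exact h.congr fun k => by rw [norm_sub_rev]

/-! ### The energy form -/

lemma flux_self (z : Euc N) {m : ℝ} (hm : 2 < m) : ‖z‖ ^ (m - 2) * ⟪z, z⟫ = ‖z‖ ^ m := by
  rw [real_inner_self_eq_norm_sq, ← Real.rpow_natCast, ← Real.rpow_add_of_nonneg (norm_nonneg _)
    (by linarith) (by norm_num)]
  norm_num

lemma flux_abs_le' (z w : Euc N) {m : ℝ} (hm : 2 < m) :
    |‖z‖ ^ (m - 2) * ⟪z, w⟫| ≤ ‖z‖ ^ (m - 1) * ‖w‖ := by
  rw [abs_mul, abs_of_nonneg (by positivity)]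
  calc ‖z‖ ^ (m - 2) * |⟪z, w⟫| ≤ ‖z‖ ^ (m - 2) * (‖z‖ * ‖w‖) := by
        gcongr; exact abs_real_inner_le_norm z w
    _ = (‖z‖ ^ (m - 2) * ‖z‖) * ‖w‖ := by ring
    _ = _ := by
        rw [← Real.rpow_add_one' (norm_nonneg _) (by linarith)]; ring_nf

lemma flux_abs_le (z w : Euc N) {m : ℝ} (hm : 2 < m) :
    |‖z‖ ^ (m - 2) * ⟪z, w⟫| ≤ ‖z‖ ^ m + ‖w‖ ^ m :=
  (flux_abs_le' z w hm).trans
    (rpow_mul_le_add (norm_nonneg _) (norm_nonneg _) (by linarith))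

lemma aestronglyMeasurable_flux {Ω : Set (Euc N)} {m : ℝ} (v : Euc N → ℝ) {w : Euc N → Euc N}
    (hw : AEStronglyMeasurable w (volume.restrict Ω)) :
    AEStronglyMeasurable (fun x => ‖gradient v x‖ ^ (m - 2) * ⟪gradient v x, w x⟫)
      (volume.restrict Ω) :=
  ((measurable_gradient' v).norm.pow_const _).aestronglyMeasurable.mul
    ((measurable_gradient' v).aestronglyMeasurable.inner hw)

lemma integrableOn_flux {Ω : Set (Euc N)} {m : ℝ} {v : Euc N → ℝ} (hm : 2 < m)
    (hv : MemW1m0 Ω m v) {φ : Euc N → ℝ} (hφ : IsTestFun Ω φ) :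
    IntegrableOn (fun x => ‖gradient v x‖ ^ (m - 2) * ⟪gradient v x, gradient φ x⟫) Ω := by
  refine (hv.2.1.add (hφ.integrable_gradient_rpow (by linarith : 0 < m)).integrableOn).mono'
    (aestronglyMeasurable_flux v (measurable_gradient' φ).aestronglyMeasurable) ?_
  filter_upwards with x
  exact flux_abs_le _ _ hm

lemma tendsto_integral_flux {Ω : Set (Euc N)} {m : ℝ} {v : Euc N → ℝ} (hm : 2 < m)
    (hv : MemW1m0 Ω m v) {w : ℕ → Euc N → Euc N} {w₀ : Euc N → Euc N} {D : Euc N → ℝ}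
    (hw : ∀ k, AEStronglyMeasurable (w k) (volume.restrict Ω)) (hD : IntegrableOn D Ω)
    (hwD : ∀ k, ∀ᵐ x ∂(volume.restrict Ω), ‖w k x‖ ^ m ≤ D x)
    (hlim : ∀ᵐ x ∂(volume.restrict Ω), Tendsto (fun k => w k x) atTop (𝓝 (w₀ x))) :
    Tendsto (fun k => ∫ x in Ω, ‖gradient v x‖ ^ (m - 2) * ⟪gradient v x, w k x⟫) atTop
      (𝓝 (∫ x in Ω, ‖gradient v x‖ ^ (m - 2) * ⟪gradient v x, w₀ x⟫)) := by
  refine tendsto_integral_of_dominated_convergence (fun x => ‖gradient v x‖ ^ m + D x)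
    (fun k => aestronglyMeasurable_flux v (hw k)) (hv.2.1.add hD) (fun k => ?_) ?_
  · filter_upwards [hwD k] with x hx
    exact (flux_abs_le _ _ hm).trans (by linarith)
  · filter_upwards [hlim] with x hx
    exact (tendsto_const_nhds.inner hx).const_mul _

/-! ### The source term is locally integrable -/

/-- A positive element of `W^{1,m}_0(Ω)` has nonzero energy. If the gradient vanished, integrating
by parts against the first coordinate would give `∫ φₖ = -∫ x₀ ∂₀φₖ → 0` along an approximating
sequence, whereas the left side tends to `∫ u > 0`. -/
lemma integral_gradient_rpow_ne_zero (hN : 1 ≤ N) {Ω : Set (Euc N)} (hΩo : IsOpen Ω)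
    (hΩb : Bornology.IsBounded Ω) (hΩn : Ω.Nonempty) {m : ℝ} (hm : 2 < m) {u : Euc N → ℝ}
    (hu : MemW1m0 Ω m u) (hpos : PosOn Ω u) : ∫ x in Ω, ‖gradient u x‖ ^ m ≠ 0 := by
  intro h0
  have hm0 : 0 < m := by linarith
  have hum := aemeasurable_of_pos hm0 hu hpos
  obtain ⟨φ, D, hφ, hD, hall⟩ := exists_approx hm0 hu hpos
  have hg : ∀ᵐ x ∂(volume.restrict Ω), gradient u x = 0 := by
    have := (integral_eq_zero_iff_of_nonneg_ae
      (Eventually.of_forall fun x => by positivity) hu.2.1).1 h0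
    filter_upwards [this] with x hx
    have hx' : ‖gradient u x‖ ^ m = 0 := hx
    rw [Real.rpow_eq_zero (norm_nonneg _) hm0.ne'] at hx'
    exact norm_eq_zero.1 hx'
  have hfin : IsFiniteMeasure (volume.restrict Ω) :=
    ⟨by rw [Measure.restrict_apply_univ]; exact hΩb.measure_lt_top⟩
  obtain ⟨R, hR⟩ := hΩb.exists_norm_le
  let i : Fin N := ⟨0, hN⟩
  let ev : Euc N := EuclideanSpace.single i (1 : ℝ)
  have hev : ‖ev‖ = 1 := by simp [ev]
  let c : Euc N →L[ℝ] ℝ := innerSL ℝ ev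
  have hc : ∀ x, |c x| ≤ ‖x‖ := fun x => by
    have := abs_real_inner_le_norm ev x
    rw [hev, one_mul] at this
    exact this
  have hcev : c ev = 1 := by
    simp only [c, innerSL_apply_apply, real_inner_self_eq_norm_sq, hev]; norm_num
  -- Integration by parts against the linear function `c`, the first coordinate.
  have hibp : ∀ k, ∫ x in Ω, φ k x = -∫ x in Ω, c x * ⟪gradient (φ k) x, ev⟫ := fun k => by
    have hk := hφ k
    have hcd : Continuous fun x => fderiv ℝ (φ k) x ev :=
      (hk.1.continuous_fderiv (by simp)).clm_apply continuous_const
    have hcs : HasCompactSupport fun x => fderiv ℝ (φ k) x ev :=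
      HasCompactSupport.intro hk.2.1 fun x hx => by
        rw [fderiv_of_notMem_tsupport (𝕜 := ℝ) hx]; rfl
    have h := integral_mul_fderiv_eq_neg_fderiv_mul_of_integrable (μ := (volume : Measure (Euc N)))
      (f := fun x => c x) (g := φ k) (v := ev) ?_ ?_ ?_ (fun x _ => c.differentiableAt)
      (fun x _ => hk.differentiable x)
    · have e1 : ∫ x, c x * fderiv ℝ (φ k) x ev = ∫ x in Ω, c x * ⟪gradient (φ k) x, ev⟫ := by
        rw [setIntegral_eq_integral_of_forall_compl_eq_zero]
        · simp only [inner_gradient_left]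
        · intro x hx
          rw [hk.gradient_eq_zero_off hx]; simp
      have e2 : ∫ x, fderiv ℝ (fun x => c x) x ev * φ k x = ∫ x in Ω, φ k x := by
        rw [setIntegral_eq_integral_of_forall_compl_eq_zero fun x hx => hk.eq_zero_off hx]
        congr 1; ext x
        have : fderiv ℝ (fun x => c x) x = c := c.fderiv
        rw [this, hcev, one_mul]
      rw [e1, e2] at h
      linarith
    · have : (fun x => fderiv ℝ (fun x => c x) x ev * φ k x) = φ k := by
        ext x
        have : fderiv ℝ (fun x => c x) x = c := c.fderiv
        rw [this, hcev, one_mul]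
      rw [this]
      exact hk.1.continuous.integrable_of_hasCompactSupport hk.2.1
    · exact (c.continuous.mul hcd).integrable_of_hasCompactSupport hcs.mul_left
    · exact (c.continuous.mul hk.1.continuous).integrable_of_hasCompactSupport hk.2.1.mul_left
  have le_one_add : ∀ z d : ℝ, 0 ≤ z → z ^ m ≤ d → 0 ≤ d → z ≤ 1 + d := fun z d hz hzd hd => by
    rcases le_total z 1 with h | h
    · linarith
    · have := Real.rpow_le_rpow_of_exponent_le h (by linarith : (1 : ℝ) ≤ m)
      rw [Real.rpow_one] at this
      linarith
  have hD1 : IntegrableOn (fun x => 1 + D x) Ω := (integrable_const (1 : ℝ)).add hD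
  have hlim1 : Tendsto (fun k => ∫ x in Ω, φ k x) atTop (𝓝 (∫ x in Ω, u x)) := by
    refine tendsto_integral_of_dominated_convergence (fun x => 1 + D x)
      (fun k => (hφ k).1.continuous.aestronglyMeasurable) hD1 (fun k => ?_) ?_
    · filter_upwards [hall] with x hx
      exact le_one_add _ _ (abs_nonneg _) (hx.2.1 k).1 hx.1
    · filter_upwards [hall] with x hx using hx.2.2.1
  have hlim2 : Tendsto (fun k => ∫ x in Ω, c x * ⟪gradient (φ k) x, ev⟫) atTop
      (𝓝 (∫ x in Ω, (0 : ℝ))) := by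
    refine tendsto_integral_of_dominated_convergence (fun x => R * (1 + D x))
      (fun k => (c.continuous.mul
        ((hφ k).continuous_gradient.inner continuous_const)).aestronglyMeasurable)
      (hD1.const_mul R) (fun k => ?_) ?_
    · filter_upwards [hall, ae_restrict_mem hΩo.measurableSet] with x hx hxΩ
      rw [norm_mul]
      have h1 : |⟪gradient (φ k) x, ev⟫| ≤ ‖gradient (φ k) x‖ := by
        simpa [hev] using abs_real_inner_le_norm (gradient (φ k) x) ev
      have hR0 : 0 ≤ R := (norm_nonneg _).trans (hR x hxΩ)
      exact mul_le_mul ((hc x).trans (hR x hxΩ))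
        (h1.trans (le_one_add _ _ (norm_nonneg _) (hx.2.1 k).2 hx.1)) (abs_nonneg _) hR0
    · filter_upwards [hall, hg] with x hx hgx
      have h := hx.2.2.2
      rw [hgx] at h
      have h2 := (h.inner (tendsto_const_nhds (x := ev))).const_mul (c x)
      simpa using h2
  rw [integral_zero] at hlim2
  have hz : ∫ x in Ω, u x = 0 := by
    refine tendsto_nhds_unique hlim1 ?_
    simp only [hibp]
    simpa using hlim2.neg
  have hui : IntegrableOn u Ω := by
    refine ((integrable_const (1 : ℝ)).add hu.1).mono' hum.aestronglyMeasurable ?_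
    filter_upwards with x
    exact le_one_add _ _ (abs_nonneg _) le_rfl (by positivity)
  have hu0 := (integral_eq_zero_iff_of_nonneg_ae (hpos.mono fun x hx => hx.le) hui).1 hz
  have hfalse : ∀ᵐ x ∂(volume.restrict Ω), False := by
    filter_upwards [hu0, hpos] with x h1 h2
    exact h2.ne' h1
  rw [ae_iff] at hfalse
  simp only [not_false_eq_true, Set.ofPred_true, Measure.restrict_apply_univ] at hfalse
  exact (hΩo.measure_pos volume hΩn).ne' hfalse

/-- The source term of a positive solution is integrable against every test function.
If it were not integrable against some `φ₀`, the right-hand side of the weak formulation would be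
the junk value `0` at `φ₀`; for every test function `φ`, at least one of `φ`, `φ + φ₀` is then in
the same situation, and the energy form would vanish identically. -/
lemma integrableOn_source (hN : 1 ≤ N) {Ω : Set (Euc N)} (hΩo : IsOpen Ω)
    (hΩb : Bornology.IsBounded Ω) (hΩn : Ω.Nonempty) {m p lam mu : ℝ} (hm : 2 < m)
    {u : Euc N → ℝ} (hu : IsPosSol Ω m lam mu p u) {φ₀ : Euc N → ℝ} (hφ₀ : IsTestFun Ω φ₀) :
    IntegrableOn (fun x => (lam * u x ^ (m - 1) + mu * u x ^ (p - 1)) * φ₀ x) Ω := by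
  by_contra hni
  obtain ⟨hW, hpos, hsol⟩ := hu
  set f : Euc N → ℝ := fun x => lam * u x ^ (m - 1) + mu * u x ^ (p - 1) with hf
  have hz0 : ∀ φ, IsTestFun Ω φ → ¬ IntegrableOn (fun x => f x * φ x) Ω →
      ∫ x in Ω, ‖gradient u x‖ ^ (m - 2) * ⟪gradient u x, gradient φ x⟫ = 0 := fun φ hφ hn => by
    rw [hsol φ hφ]
    exact integral_undef hn
  have hz : ∀ φ, IsTestFun Ω φ →
      ∫ x in Ω, ‖gradient u x‖ ^ (m - 2) * ⟪gradient u x, gradient φ x⟫ = 0 := fun φ hφ => by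
    by_cases hi : IntegrableOn (fun x => f x * φ x) Ω
    · have h1 := hz0 φ₀ hφ₀ hni
      have h2 := hz0 _ (hφ.add hφ₀) fun h => hni <| by
        refine (h.sub hi).congr (Eventually.of_forall fun x => ?_)
        simp only [Pi.sub_apply]; ring
      have hgr : ∀ x, gradient (fun y => φ y + φ₀ y) x = gradient φ x + gradient φ₀ x := fun x => by
        unfold gradient
        rw [show (fun y => φ y + φ₀ y) = φ + φ₀ from rfl,
          fderiv_add (hφ.differentiable x) (hφ₀.differentiable x), map_add]
      simp only [hgr, inner_add_right, mul_add] at h2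
      rw [integral_add (integrableOn_flux hm hW hφ) (integrableOn_flux hm hW hφ₀), h1] at h2
      linarith
    · exact hz0 φ hφ hi
  obtain ⟨φ, D, hφ, hD, hall⟩ := exists_approx (by linarith : 0 < m) hW hpos
  have hlim := tendsto_integral_flux hm hW (w := fun k => gradient (φ k)) (w₀ := gradient u)
    (fun k => (measurable_gradient' (φ k)).aestronglyMeasurable) hD
    (fun k => hall.mono fun x hx => (hx.2.1 k).2) (hall.mono fun x hx => hx.2.2.2)
  simp only [hz _ (hφ _), flux_self _ hm] at hlim
  exact integral_gradient_rpow_ne_zero hN hΩo hΩb hΩn hm hW hpos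
    (tendsto_nhds_unique hlim tendsto_const_nhds)

/-! ### Nonlinear test functions -/

/-- The weak formulation may be tested with `Φ · b(v)`, for a test function `Φ` and a smooth `b`
which is bounded together with its derivative. -/
lemma weak_form_mul_comp (hN : 1 ≤ N) {Ω : Set (Euc N)} (hΩo : IsOpen Ω)
    (hΩb : Bornology.IsBounded Ω) (hΩn : Ω.Nonempty) {m p lam mu : ℝ} (hm : 2 < m)
    {v : Euc N → ℝ} (hv : IsPosSol Ω m lam mu p v) {Φ : Euc N → ℝ} (hΦ : IsTestFun Ω Φ)
    {b : ℝ → ℝ} (hb : ContDiff ℝ (⊤ : ℕ∞) b) {C : ℝ} (hbC : ∀ t, |b t| ≤ C)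
    (hbC' : ∀ t, |deriv b t| ≤ C) :
    IntegrableOn (fun x => (lam * v x ^ (m - 1) + mu * v x ^ (p - 1)) * (Φ x * b (v x))) Ω ∧
    ∫ x in Ω, ‖gradient v x‖ ^ (m - 2) *
        ⟪gradient v x, b (v x) • gradient Φ x + (Φ x * deriv b (v x)) • gradient v x⟫
      = ∫ x in Ω, (lam * v x ^ (m - 1) + mu * v x ^ (p - 1)) * (Φ x * b (v x)) := by
  have hm0 : 0 < m := by linarith
  have hsrc := integrableOn_source hN hΩo hΩb hΩn hm hv hΦ
  obtain ⟨hW, hpos, hsol⟩ := hv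
  have hvm := aemeasurable_of_pos hm0 hW hpos
  set f : Euc N → ℝ := fun x => lam * v x ^ (m - 1) + mu * v x ^ (p - 1) with hf
  have hfm : AEMeasurable f (volume.restrict Ω) :=
    ((hvm.pow_const _).const_mul _).add ((hvm.pow_const _).const_mul _)
  have hC : 0 ≤ C := (abs_nonneg _).trans (hbC 0)
  have hbc : Continuous b := hb.continuous
  have hbc' : Continuous (deriv b) := hb.continuous_deriv (by simp)
  have hbd : Differentiable ℝ b := hb.differentiable (by simp)
  have hle : ∀ x t, ‖f x * (Φ x * b t)‖ ≤ C * ‖f x * Φ x‖ := fun x t => by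
    rw [← mul_assoc, norm_mul, mul_comm]
    gcongr
    exact hbC t
  refine ⟨(hsrc.norm.const_mul C).mono' (hfm.mul (hΦ.1.continuous.aemeasurable.mul
    (hbc.measurable.comp_aemeasurable hvm))).aestronglyMeasurable
    (Eventually.of_forall fun x => hle x _), ?_⟩
  obtain ⟨φ, D, hφ, hD, hall⟩ := exists_approx hm0 hW hpos
  obtain ⟨M, hM0, hM⟩ := hΦ.exists_bound
  have hΨ : ∀ k, IsTestFun Ω (fun x => Φ x * b (φ k x)) := fun k =>
    hΦ.mul_smooth (hb.comp (hφ k).1)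
  have hgr : ∀ k x, gradient (fun x => Φ x * b (φ k x)) x
      = b (φ k x) • gradient Φ x + (Φ x * deriv b (φ k x)) • gradient (φ k) x := fun k x =>
    gradient_mul_comp hbd hΦ.differentiable (hφ k).differentiable x
  have hlimL := tendsto_integral_flux hm hW
    (w := fun k => gradient (fun x => Φ x * b (φ k x)))
    (w₀ := fun x => b (v x) • gradient Φ x + (Φ x * deriv b (v x)) • gradient v x)
    (D := fun x => 2 ^ m * (C ^ m * ‖gradient Φ x‖ ^ m + (M * C) ^ m * D x))
    (fun k => (measurable_gradient' _).aestronglyMeasurable)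
    ((((hΦ.integrable_gradient_rpow hm0).integrableOn.const_mul _).add
      (hD.const_mul _)).const_mul _) (fun k => ?_) ?_
  · have hlimR : Tendsto (fun k => ∫ x in Ω, f x * (Φ x * b (φ k x))) atTop
        (𝓝 (∫ x in Ω, f x * (Φ x * b (v x)))) := by
      refine tendsto_integral_of_dominated_convergence (fun x => C * ‖f x * Φ x‖)
        (fun k => (hfm.mul (hΨ k).1.continuous.aemeasurable).aestronglyMeasurable)
        (hsrc.norm.const_mul C) (fun k => Eventually.of_forall fun x => hle x _) ?_
      filter_upwards [hall] with x hx
      exact (((hbc.tendsto _).comp hx.2.2.1).const_mul _).const_mul _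
    refine tendsto_nhds_unique hlimL (hlimR.congr fun k => ?_)
    exact (hsol _ (hΨ k)).symm
  · filter_upwards [hall] with x hx
    rw [hgr]
    have h1 : ‖b (φ k x) • gradient Φ x + (Φ x * deriv b (φ k x)) • gradient (φ k) x‖
        ≤ C * ‖gradient Φ x‖ + (M * C) * ‖gradient (φ k) x‖ := by
      refine (norm_add_le _ _).trans ?_
      rw [norm_smul, norm_smul, norm_mul]
      gcongr
      · exact hbC _
      · exact hM x
      · exact hbC' _
    refine (Real.rpow_le_rpow (norm_nonneg _) h1 hm0.le).trans ?_
    refine (add_rpow_le_two_rpow (by positivity) (by positivity) hm0.le).trans ?_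
    rw [Real.mul_rpow hC (norm_nonneg _), Real.mul_rpow (by positivity) (norm_nonneg _)]
    gcongr
    exact (hx.2.1 k).2
  · filter_upwards [hall] with x hx
    simp only [hgr]
    exact (((hbc.tendsto _).comp hx.2.2.1).smul_const _).add
      ((((hbc'.tendsto _).comp hx.2.2.1).const_mul _).smul hx.2.2.2)

/-! ### Picone's inequality -/

/-- A smooth substitute for `ε + max t 0`: it is at least `ε` on the whole line, while its slope
is at least `1` on the half-line `t ≥ 0`. -/
def shiftFun (ε t : ℝ) : ℝ := √(t ^ 2 + ε ^ 2) + ε * Real.arctan (t / ε) + 2 * ε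

/-- The derivative of `shiftFun ε`. -/
def shiftDeriv (ε t : ℝ) : ℝ := t / √(t ^ 2 + ε ^ 2) + ε ^ 2 / (t ^ 2 + ε ^ 2)

lemma abs_arctan_le_two (t : ℝ) : |Real.arctan t| ≤ 2 := by
  rw [abs_le]
  constructor <;>
    linarith [Real.neg_pi_div_two_lt_arctan t, Real.arctan_lt_pi_div_two t, Real.pi_lt_four]

section shift

variable {ε : ℝ}

lemma hasDerivAt_shiftFun (hε : 0 < ε) (t : ℝ) :
    HasDerivAt (shiftFun ε) (shiftDeriv ε t) t := by
  have hpos : 0 < t ^ 2 + ε ^ 2 := by positivity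
  have h1 : HasDerivAt (fun t => √(t ^ 2 + ε ^ 2)) (2 * t / (2 * √(t ^ 2 + ε ^ 2))) t := by
    have := ((hasDerivAt_pow 2 t).add_const (ε ^ 2)).sqrt hpos.ne'
    simpa using this
  have h2 := (((hasDerivAt_id t).div_const ε).arctan).const_mul ε
  refine ((h1.add h2).add_const (2 * ε)).congr_deriv ?_
  unfold shiftDeriv
  have : 0 < √(t ^ 2 + ε ^ 2) := Real.sqrt_pos.2 hpos
  simp only [id]
  congr 1
  · rw [mul_div_mul_left _ _ two_ne_zero]
  · field_simp
    ring

lemma contDiff_shiftFun (hε : 0 < ε) : ContDiff ℝ (⊤ : ℕ∞) (shiftFun ε) := by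
  unfold shiftFun
  have h1 : ContDiff ℝ (⊤ : ℕ∞) fun t : ℝ => √(t ^ 2 + ε ^ 2) :=
    ((contDiff_id.pow 2).add contDiff_const).sqrt fun t => by
      have : 0 < t ^ 2 + ε ^ 2 := by positivity
      exact this.ne'
  exact (h1.add (contDiff_const.mul ((contDiff_id.div_const ε).arctan))).add contDiff_const

lemma le_shiftFun (hε : 0 < ε) (t : ℝ) : ε ≤ shiftFun ε t := by
  have h1 : ε ≤ √(t ^ 2 + ε ^ 2) := Real.le_sqrt_of_sq_le (by nlinarith [sq_nonneg t])
  have h2 := (abs_le.1 (abs_arctan_le_two (t / ε))).1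
  unfold shiftFun
  nlinarith

lemma self_le_shiftFun (hε : 0 < ε) (t : ℝ) : t ≤ shiftFun ε t := by
  have h1 : t ≤ √(t ^ 2 + ε ^ 2) := Real.le_sqrt_of_sq_le (by nlinarith [sq_nonneg ε])
  have h2 := (abs_le.1 (abs_arctan_le_two (t / ε))).1
  unfold shiftFun
  nlinarith

lemma shiftFun_le (hε : 0 < ε) {t : ℝ} (ht : 0 ≤ t) : shiftFun ε t ≤ t + 5 * ε := by
  have h1 : √(t ^ 2 + ε ^ 2) ≤ t + ε := by
    rw [Real.sqrt_le_left (by positivity)]; nlinarith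
  have h2 := (abs_le.1 (abs_arctan_le_two (t / ε))).2
  unfold shiftFun
  nlinarith

lemma one_le_shiftDeriv (hε : 0 < ε) {t : ℝ} (ht : 0 ≤ t) : 1 ≤ shiftDeriv ε t := by
  have hpos : 0 < t ^ 2 + ε ^ 2 := by positivity
  have hw : 0 < √(t ^ 2 + ε ^ 2) := Real.sqrt_pos.2 hpos
  have hsq : √(t ^ 2 + ε ^ 2) ^ 2 = t ^ 2 + ε ^ 2 := Real.sq_sqrt hpos.le
  have h1 : t ≤ √(t ^ 2 + ε ^ 2) := Real.le_sqrt_of_sq_le (by nlinarith [sq_nonneg ε])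
  unfold shiftDeriv
  set w := √(t ^ 2 + ε ^ 2)
  rw [← hsq, show t / w + ε ^ 2 / w ^ 2 = (t * w + ε ^ 2) / w ^ 2 by field_simp,
    le_div_iff₀ (by positivity)]
  nlinarith

lemma abs_shiftDeriv_le (hε : 0 < ε) (t : ℝ) : |shiftDeriv ε t| ≤ 2 := by
  have hpos : 0 < t ^ 2 + ε ^ 2 := by positivity
  have hw : 0 < √(t ^ 2 + ε ^ 2) := Real.sqrt_pos.2 hpos
  have h1 : |t / √(t ^ 2 + ε ^ 2)| ≤ 1 := by
    rw [abs_div, abs_of_pos hw, div_le_one hw]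
    exact Real.abs_le_sqrt (by nlinarith [sq_nonneg ε])
  have h2 : |ε ^ 2 / (t ^ 2 + ε ^ 2)| ≤ 1 := by
    rw [abs_of_nonneg (by positivity), div_le_one hpos]
    nlinarith [sq_nonneg t]
  unfold shiftDeriv
  exact (abs_add_le _ _).trans (by linarith)

variable {m : ℝ}

lemma hasDerivAt_shiftFun_rpow (hε : 0 < ε) (t : ℝ) :
    HasDerivAt (fun t => shiftFun ε t ^ (1 - m))
      (shiftDeriv ε t * (1 - m) * shiftFun ε t ^ (-m)) t := by
  have := (hasDerivAt_shiftFun hε t).rpow_const (p := 1 - m)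
    (Or.inl (hε.trans_le (le_shiftFun hε t)).ne')
  rwa [show 1 - m - 1 = -m by ring] at this

lemma contDiff_shiftFun_rpow (hε : 0 < ε) :
    ContDiff ℝ (⊤ : ℕ∞) (fun t => shiftFun ε t ^ (1 - m)) :=
  (contDiff_shiftFun hε).rpow_const_of_ne fun t => (hε.trans_le (le_shiftFun hε t)).ne'

end shift

/-- A smooth substitute for `|s| ^ m`, vanishing at the origin. -/
def powFun (m δ s : ℝ) : ℝ := (s ^ 2 + δ ^ 2) ^ (m / 2) - δ ^ m

section powFun

variable {m δ : ℝ}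

lemma sqrt_rpow (hδ : 0 < δ) (s : ℝ) : (s ^ 2 + δ ^ 2) ^ (m / 2) = √(s ^ 2 + δ ^ 2) ^ m := by
  rw [Real.sqrt_eq_rpow, ← Real.rpow_mul (by positivity)]
  ring_nf

lemma powFun_zero (hδ : 0 < δ) : powFun m δ 0 = 0 := by
  unfold powFun
  rw [sqrt_rpow hδ]
  simp [Real.sqrt_sq hδ.le]

lemma powFun_nonneg (hm : 0 < m) (hδ : 0 < δ) (s : ℝ) : 0 ≤ powFun m δ s := by
  unfold powFun
  rw [sqrt_rpow hδ, sub_nonneg]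
  exact Real.rpow_le_rpow hδ.le (Real.le_sqrt_of_sq_le (by nlinarith [sq_nonneg s])) hm.le

lemma contDiff_powFun (hδ : 0 < δ) : ContDiff ℝ (⊤ : ℕ∞) (powFun m δ) := by
  unfold powFun
  exact (((contDiff_id.pow 2).add contDiff_const).rpow_const_of_ne fun s => by
    have : 0 < s ^ 2 + δ ^ 2 := by positivity
    exact this.ne').sub contDiff_const

lemma abs_deriv_powFun_le (hm : 2 < m) (hδ : 0 < δ) (s : ℝ) :
    |deriv (powFun m δ) s| ≤ m * √(s ^ 2 + δ ^ 2) ^ (m - 1) := by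
  have hpos : 0 < s ^ 2 + δ ^ 2 := by positivity
  have hw : 0 < √(s ^ 2 + δ ^ 2) := Real.sqrt_pos.2 hpos
  have h : HasDerivAt (powFun m δ) (2 * s * (m / 2) * (s ^ 2 + δ ^ 2) ^ (m / 2 - 1)) s := by
    refine HasDerivAt.congr_deriv ((((hasDerivAt_pow 2 s).add_const (δ ^ 2)).rpow_const
      (p := m / 2) (Or.inl hpos.ne')).sub_const (δ ^ m)) ?_
    simp
  have e : (s ^ 2 + δ ^ 2) ^ (m / 2 - 1) = √(s ^ 2 + δ ^ 2) ^ (m - 2) := by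
    rw [← sqrt_rpow hδ]; ring_nf
  rw [h.deriv, e, show 2 * s * (m / 2) = m * s by ring, abs_mul, abs_mul, abs_of_pos (by linarith),
    abs_of_nonneg (by positivity : 0 ≤ √(s ^ 2 + δ ^ 2) ^ (m - 2))]
  have h1 : |s| ≤ √(s ^ 2 + δ ^ 2) := Real.abs_le_sqrt (by nlinarith [sq_nonneg δ])
  calc m * |s| * √(s ^ 2 + δ ^ 2) ^ (m - 2)
      ≤ m * √(s ^ 2 + δ ^ 2) * √(s ^ 2 + δ ^ 2) ^ (m - 2) := by gcongr
    _ = m * (√(s ^ 2 + δ ^ 2) ^ (m - 2) * √(s ^ 2 + δ ^ 2)) := by ring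
    _ = _ := by
        rw [← Real.rpow_add_one hw.ne']; ring_nf

end powFun

lemma young_rpow {x y m : ℝ} (hx : 0 ≤ x) (hy : 0 ≤ y) (hm : 1 < m) :
    m * (x ^ (m - 1) * y) ≤ y ^ m + (m - 1) * x ^ m := by
  have hm1 : 0 < m - 1 := by linarith
  have hpq : (m / (m - 1)).HolderConjugate m := by
    rw [Real.holderConjugate_iff]
    refine ⟨by rw [lt_div_iff₀ hm1]; linarith, ?_⟩
    field_simp
    ring
  have h := Real.young_inequality_of_nonneg (Real.rpow_nonneg hx (m - 1)) hy hpq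
  rw [← Real.rpow_mul hx, mul_div_cancel₀ _ hm1.ne'] at h
  have h2 := mul_le_mul_of_nonneg_left h (by linarith : 0 ≤ m)
  refine h2.trans (le_of_eq ?_)
  field_simp
  ring

/-- Pointwise Picone inequality with the regularisations `powFun` and `shiftFun` in place of
`|φ| ^ m` and `v`; the last term is the price of the parameter `δ`. -/
lemma picone_pointwise {m ε δ : ℝ} (hm : 2 < m) (hε : 0 < ε) (hδ : 0 < δ) (z y : Euc N)
    (s : ℝ) {t : ℝ} (ht : 0 < t) :
    ‖z‖ ^ (m - 2) * ⟪z, (shiftFun ε t ^ (1 - m)) • (deriv (powFun m δ) s • y)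
      + (powFun m δ s * deriv (fun t => shiftFun ε t ^ (1 - m)) t) • z⟫
      ≤ ‖y‖ ^ m + (m - 1) * (δ ^ m * ε ^ (-m)) * ‖z‖ ^ m := by
  have hm1 : 0 < m - 1 := by linarith
  have hGε := le_shiftFun hε t
  have hG : 0 < shiftFun ε t := hε.trans_le hGε
  have hG' : 1 ≤ shiftDeriv ε t := one_le_shiftDeriv hε ht.le
  have ha := powFun_nonneg (by linarith : 0 < m) hδ s
  have hda := abs_deriv_powFun_le hm hδ s
  have haψ : powFun m δ s = √(s ^ 2 + δ ^ 2) ^ m - δ ^ m := by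
    unfold powFun; rw [sqrt_rpow hδ]
  have hψ : 0 ≤ √(s ^ 2 + δ ^ 2) := Real.sqrt_nonneg _
  rw [(hasDerivAt_shiftFun_rpow hε t).deriv, inner_add_right, mul_add]
  set G := shiftFun ε t
  set a := powFun m δ s
  set ψ := √(s ^ 2 + δ ^ 2)
  set G' := shiftDeriv ε t
  have hZ : 0 ≤ ‖z‖ ^ m := by positivity
  have hGm : 0 < G ^ (-m) := by positivity
  have hGle : G ^ (-m) ≤ ε ^ (-m) :=
    Real.rpow_le_rpow_of_nonpos hε hGε (by linarith)
  have h2 : ‖z‖ ^ (m - 2) * ⟪z, (a * (G' * (1 - m) * G ^ (-m))) • z⟫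
      = -((m - 1) * a * G' * G ^ (-m) * ‖z‖ ^ m) := by
    rw [inner_smul_right, ← flux_self z hm]; ring
  have h1 : ‖z‖ ^ (m - 2) * ⟪z, (G ^ (1 - m)) • (deriv (powFun m δ) s • y)⟫
      ≤ m * ((ψ * ‖z‖ / G) ^ (m - 1) * ‖y‖) := by
    rw [inner_smul_right, inner_smul_right]
    have e : (ψ * ‖z‖ / G) ^ (m - 1) = ψ ^ (m - 1) * ‖z‖ ^ (m - 1) * G ^ (1 - m) := by
      rw [Real.div_rpow (by positivity) hG.le, Real.mul_rpow hψ (norm_nonneg _), div_eq_mul_inv,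
        ← Real.rpow_neg hG.le]
      ring_nf
    rw [e]
    have hf := flux_abs_le' z y hm
    calc ‖z‖ ^ (m - 2) * (G ^ (1 - m) * (deriv (powFun m δ) s * ⟪z, y⟫))
        = G ^ (1 - m) * (deriv (powFun m δ) s * (‖z‖ ^ (m - 2) * ⟪z, y⟫)) := by ring
      _ ≤ G ^ (1 - m) * (m * ψ ^ (m - 1) * (‖z‖ ^ (m - 1) * ‖y‖)) := by
          refine mul_le_mul_of_nonneg_left ?_ (by positivity)
          refine (le_abs_self _).trans ?_
          rw [abs_mul]
          exact mul_le_mul hda hf (abs_nonneg _) (by positivity)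
      _ = _ := by ring
  have h3 := young_rpow (x := ψ * ‖z‖ / G) (y := ‖y‖) (by positivity) (norm_nonneg _)
    (by linarith : 1 < m)
  have e3 : (ψ * ‖z‖ / G) ^ m = (a + δ ^ m) * ‖z‖ ^ m * G ^ (-m) := by
    rw [Real.div_rpow (by positivity) hG.le, Real.mul_rpow hψ (norm_nonneg _), div_eq_mul_inv,
      ← Real.rpow_neg hG.le, haψ, sub_add_cancel]
  rw [e3] at h3
  have h4 : (m - 1) * a * G ^ (-m) * ‖z‖ ^ m ≤ (m - 1) * a * G' * G ^ (-m) * ‖z‖ ^ m := by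
    have h : (m - 1) * a ≤ (m - 1) * a * G' := le_mul_of_one_le_right (by positivity) hG'
    gcongr
  have h5 : (m - 1) * (δ ^ m * G ^ (-m)) * ‖z‖ ^ m ≤ (m - 1) * (δ ^ m * ε ^ (-m)) * ‖z‖ ^ m := by
    gcongr
  rw [h2]
  nlinarith

/-- The integral form of Picone's inequality: for a solution `v` and any positive
`u ∈ W^{1,m}_0(Ω)`, `∫ (-Δ_m v / v ^ (m - 1)) u ^ m ≤ ∫ |∇u| ^ m`. -/
lemma picone_integral (hN : 1 ≤ N) {Ω : Set (Euc N)} (hΩo : IsOpen Ω)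
    (hΩb : Bornology.IsBounded Ω) (hΩn : Ω.Nonempty) {m p lam mu : ℝ} (hm : 2 < m)
    (hlam : 0 < lam) (hmu : 0 < mu) {u v : Euc N → ℝ}
    (hu : MemW1m0 Ω m u) (hupos : PosOn Ω u) (hv : IsPosSol Ω m lam mu p v) :
    ∫⁻ x in Ω, ENNReal.ofReal ((lam + mu * v x ^ (p - m)) * u x ^ m)
      ≤ ENNReal.ofReal (∫ x in Ω, ‖gradient u x‖ ^ m) := by
  have hm0 : 0 < m := by linarith
  obtain ⟨φ, D, hφ, hD, hall⟩ := exists_approx hm0 hu hupos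
  set ε : ℕ → ℝ := fun n => 1 / ((n : ℝ) + 1) with hεdef
  have hε : ∀ n, 0 < ε n := fun n => by simp only [hεdef]; positivity
  have hεlim : Tendsto ε atTop (𝓝 0) := tendsto_one_div_add_atTop_nhds_zero_nat
  set δ : ℕ → ℝ := fun n => ε n ^ 2 with hδdef
  have hδ : ∀ n, 0 < δ n := fun n => pow_pos (hε n) 2
  have herr : ∀ n, δ n ^ m * ε n ^ (-m) = ε n ^ m := fun n => by
    simp only [hδdef]
    rw [sq, Real.mul_rpow (hε n).le (hε n).le, mul_assoc, ← Real.rpow_add (hε n)]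
    simp
  set b : ℕ → ℝ → ℝ := fun n t => shiftFun (ε n) t ^ (1 - m) with hbdef
  set a : ℕ → ℝ → ℝ := fun n => powFun m (δ n) with hadef
  set f : Euc N → ℝ := fun x => lam * v x ^ (m - 1) + mu * v x ^ (p - 1) with hf
  have hΦ : ∀ n, IsTestFun Ω (fun x => a n (φ n x)) := fun n =>
    (hφ n).comp_left (contDiff_powFun (hδ n)) (powFun_zero (hδ n))
  have hG0 : ∀ n t, 0 < shiftFun (ε n) t := fun n t => (hε n).trans_le (le_shiftFun (hε n) t)
  have hb : ∀ n t, |b n t| ≤ ε n ^ (1 - m) := fun n t => by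
    simp only [hbdef]
    rw [abs_of_nonneg (Real.rpow_nonneg (hG0 n t).le _)]
    exact Real.rpow_le_rpow_of_nonpos (hε n) (le_shiftFun (hε n) t) (by linarith)
  have hb' : ∀ n t, |deriv (b n) t| ≤ 2 * (m - 1) * ε n ^ (-m) := fun n t => by
    simp only [hbdef]
    rw [(hasDerivAt_shiftFun_rpow (hε n) t).deriv, abs_mul, abs_mul, abs_sub_comm,
      abs_of_pos (by linarith : 0 < m - 1), abs_of_nonneg (Real.rpow_nonneg (hG0 n t).le _)]
    have h1 := abs_shiftDeriv_le (hε n) t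
    have h2 : shiftFun (ε n) t ^ (-m) ≤ ε n ^ (-m) :=
      Real.rpow_le_rpow_of_nonpos (hε n) (le_shiftFun (hε n) t) (by linarith)
    have h3 : 0 < m - 1 := by linarith
    have h4 := Real.rpow_nonneg (hG0 n t).le (-m)
    gcongr
  have hweak := fun n => weak_form_mul_comp hN hΩo hΩb hΩn hm hv (hΦ n)
    (contDiff_shiftFun_rpow (m := m) (hε n))
    (C := max (ε n ^ (1 - m)) (2 * (m - 1) * ε n ^ (-m)))
    (fun t => (hb n t).trans (le_max_left _ _)) (fun t => (hb' n t).trans (le_max_right _ _))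
  obtain ⟨hW, hpos, -⟩ := hv
  have hvm := aemeasurable_of_pos hm0 hW hpos
  set F : ℕ → Euc N → ℝ := fun n x => f x * (a n (φ n x) * b n (v x)) with hFdef
  have hFi : ∀ n, IntegrableOn (F n) Ω := fun n => (hweak n).1
  have hF0 : ∀ n, 0 ≤ᵐ[volume.restrict Ω] F n := fun n => by
    filter_upwards [hpos] with x hx
    have h1 := powFun_nonneg hm0 (hδ n) (φ n x)
    have h2 := Real.rpow_nonneg (hG0 n (v x)).le (1 - m)
    simp only [hFdef, hf, hadef, hbdef, Pi.zero_apply]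
    positivity
  have hFle : ∀ n, ∫ x in Ω, F n x ≤ (∫ x in Ω, ‖gradient (φ n) x‖ ^ m)
      + (m - 1) * ε n ^ m * ∫ x in Ω, ‖gradient v x‖ ^ m := fun n => by
    have hgi := ((hφ n).integrable_gradient_rpow hm0).integrableOn (s := Ω)
    have hR : IntegrableOn (fun x => ‖gradient (φ n) x‖ ^ m
        + (m - 1) * (δ n ^ m * ε n ^ (-m)) * ‖gradient v x‖ ^ m) Ω :=
      hgi.add (hW.2.1.const_mul _)
    rw [← herr n, ← integral_const_mul, ← integral_add hgi (hW.2.1.const_mul _)]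
    simp only [hFdef]
    rw [← (hweak n).2]
    by_cases hLi : IntegrableOn (fun x => ‖gradient v x‖ ^ (m - 2) *
        ⟪gradient v x, b n (v x) • gradient (fun x => a n (φ n x)) x
          + (a n (φ n x) * deriv (b n) (v x)) • gradient v x⟫) Ω
    · refine integral_mono_ae hLi hR ?_
      filter_upwards [hpos] with x hx
      simp only [gradient_comp ((contDiff_powFun (m := m) (hδ n)).differentiable (by simp))
        (hφ n).differentiable, hadef]
      exact picone_pointwise hm (hε n) (hδ n) _ _ _ hx
    · rw [integral_undef hLi]
      exact integral_nonneg fun x => by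
        have : 0 < m - 1 := by linarith
        have := (hδ n).le
        have := (hε n).le
        positivity
  have hRlim : Tendsto (fun n => (∫ x in Ω, ‖gradient (φ n) x‖ ^ m)
      + (m - 1) * ε n ^ m * ∫ x in Ω, ‖gradient v x‖ ^ m) atTop
      (𝓝 (∫ x in Ω, ‖gradient u x‖ ^ m)) := by
    have h1 : Tendsto (fun n => ∫ x in Ω, ‖gradient (φ n) x‖ ^ m) atTop
        (𝓝 (∫ x in Ω, ‖gradient u x‖ ^ m)) := by
      refine tendsto_integral_of_dominated_convergence D
        (fun n => ((measurable_gradient' (φ n)).norm.pow_const _).aestronglyMeasurable) hD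
        (fun n => ?_) ?_
      · filter_upwards [hall] with x hx
        rw [Real.norm_of_nonneg (by positivity)]
        exact (hx.2.1 n).2
      · filter_upwards [hall] with x hx
        exact hx.2.2.2.norm.rpow_const (Or.inr hm0.le)
    have h2 : Tendsto (fun n => ε n ^ m) atTop (𝓝 0) := by
      have := hεlim.rpow_const (p := m) (Or.inr hm0.le)
      rwa [Real.zero_rpow hm0.ne'] at this
    have h3 := h1.add ((h2.const_mul (m - 1)).mul_const (∫ x in Ω, ‖gradient v x‖ ^ m))
    simpa using h3
  have hFlim : ∀ᵐ x ∂(volume.restrict Ω), Tendsto (fun n => F n x) atTop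
      (𝓝 ((lam + mu * v x ^ (p - m)) * u x ^ m)) := by
    filter_upwards [hall, hpos, hupos] with x hx hvx hux
    have ha : Tendsto (fun n => a n (φ n x)) atTop (𝓝 (u x ^ m)) := by
      have hδlim : Tendsto δ atTop (𝓝 0) := by simpa using hεlim.pow 2
      have h1 := (((hx.2.2.1.pow 2).add (hδlim.pow 2)).rpow_const (p := m / 2)
        (Or.inr (by positivity))).sub (hδlim.rpow_const (p := m) (Or.inr hm0.le))
      have e : (u x ^ 2 + (0 : ℝ) ^ 2) ^ (m / 2) - (0 : ℝ) ^ m = u x ^ m := by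
        rw [Real.zero_rpow hm0.ne', zero_pow two_ne_zero, add_zero, sub_zero, ← Real.rpow_natCast,
          ← Real.rpow_mul hux.le]
        congr 1
        push_cast
        ring
      rw [e] at h1
      exact h1
    have hG : Tendsto (fun n => shiftFun (ε n) (v x)) atTop (𝓝 (v x)) := by
      refine tendsto_of_tendsto_of_tendsto_of_le_of_le tendsto_const_nhds
        (h := fun n => v x + 5 * ε n) ?_ (fun n => self_le_shiftFun (hε n) _)
        (fun n => shiftFun_le (hε n) hvx.le)
      simpa using (hεlim.const_mul 5).const_add (v x)
    have hbl : Tendsto (fun n => b n (v x)) atTop (𝓝 (v x ^ (1 - m))) :=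
      hG.rpow_const (Or.inl hvx.ne')
    have h := (ha.mul hbl).const_mul (f x)
    have e : f x * (u x ^ m * v x ^ (1 - m)) = (lam + mu * v x ^ (p - m)) * u x ^ m := by
      have e1 : v x ^ (m - 1) * v x ^ (1 - m) = 1 := by
        rw [← Real.rpow_add hvx]; simp
      have e2 : v x ^ (p - 1) * v x ^ (1 - m) = v x ^ (p - m) := by
        rw [← Real.rpow_add hvx]; ring_nf
      rw [← e2]
      simp only [hf]
      linear_combination lam * u x ^ m * e1
    rw [e] at h
    exact h
  calc ∫⁻ x in Ω, ENNReal.ofReal ((lam + mu * v x ^ (p - m)) * u x ^ m)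
      = ∫⁻ x in Ω, liminf (fun n => ENNReal.ofReal (F n x)) atTop := by
        refine lintegral_congr_ae ?_
        filter_upwards [hFlim] with x hx
        exact (((ENNReal.continuous_ofReal.tendsto _).comp hx).liminf_eq).symm
    _ ≤ liminf (fun n => ∫⁻ x in Ω, ENNReal.ofReal (F n x)) atTop :=
        lintegral_liminf_le' fun n => (hFi n).aestronglyMeasurable.aemeasurable.ennreal_ofReal
    _ ≤ liminf (fun n => ENNReal.ofReal ((∫ x in Ω, ‖gradient (φ n) x‖ ^ m)
      + (m - 1) * ε n ^ m * ∫ x in Ω, ‖gradient v x‖ ^ m)) atTop := by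
        refine liminf_le_liminf (Eventually.of_forall fun n => ?_)
        rw [← ofReal_integral_eq_lintegral_ofReal (hFi n) (hF0 n)]
        exact ENNReal.ofReal_le_ofReal (hFle n)
    _ = _ := ((ENNReal.continuous_ofReal.tendsto _).comp hRlim).liminf_eq

/-! ### Testing the equation with the solution itself -/

/-- A smooth cutoff, equal to `0` at the origin and close to `1` away from it. -/
def cutFun (η s : ℝ) : ℝ := s ^ 2 / (s ^ 2 + η ^ 2)

/-- A smooth bounded substitute for the identity. -/
def truncFun (η t : ℝ) : ℝ := Real.arctan (η * t) / η

section cut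

variable {η : ℝ}

lemma contDiff_cutFun (hη : 0 < η) : ContDiff ℝ (⊤ : ℕ∞) (cutFun η) := by
  unfold cutFun
  exact (contDiff_id.pow 2).div ((contDiff_id.pow 2).add contDiff_const) fun s => by
    have : 0 < s ^ 2 + η ^ 2 := by positivity
    exact this.ne'

lemma deriv_cutFun (hη : 0 < η) (s : ℝ) :
    deriv (cutFun η) s = 2 * s * η ^ 2 / (s ^ 2 + η ^ 2) ^ 2 := by
  have hpos : 0 < s ^ 2 + η ^ 2 := by positivity
  have h : HasDerivAt (cutFun η) (2 * s * η ^ 2 / (s ^ 2 + η ^ 2) ^ 2) s := by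
    refine HasDerivAt.congr_deriv ((hasDerivAt_pow 2 s).div
      ((hasDerivAt_pow 2 s).add_const (η ^ 2)) hpos.ne') ?_
    congr 1
    norm_num
    ring
  exact h.deriv

lemma abs_deriv_cutFun_le (hη : 0 < η) (s : ℝ) : |deriv (cutFun η) s| ≤ 1 / η := by
  have hpos : 0 < s ^ 2 + η ^ 2 := by positivity
  rw [deriv_cutFun hη, abs_div, abs_of_pos (by positivity : 0 < (s ^ 2 + η ^ 2) ^ 2),
    div_le_div_iff₀ (by positivity) hη, abs_mul, abs_mul, abs_of_pos (two_pos : (0 : ℝ) < 2),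
    abs_of_pos (by positivity : 0 < η ^ 2)]
  have h1 : 2 * |s| * η ≤ s ^ 2 + η ^ 2 := by
    rw [← sq_abs s]; nlinarith [sq_nonneg (|s| - η)]
  have h2 : η ^ 2 ≤ s ^ 2 + η ^ 2 := by nlinarith [sq_nonneg s]
  calc 2 * |s| * η ^ 2 * η = (2 * |s| * η) * η ^ 2 := by ring
    _ ≤ (s ^ 2 + η ^ 2) * (s ^ 2 + η ^ 2) := by gcongr
    _ = _ := by ring

lemma cutFun_nonneg (s : ℝ) : 0 ≤ cutFun η s := by
  unfold cutFun; positivity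

lemma cutFun_le_one (s : ℝ) : cutFun η s ≤ 1 := by
  unfold cutFun
  exact div_le_one_of_le₀ (by nlinarith [sq_nonneg η]) (by positivity)

lemma contDiff_truncFun : ContDiff ℝ (⊤ : ℕ∞) (truncFun η) := by
  unfold truncFun
  exact ((contDiff_const.mul contDiff_id).arctan).div_const η

lemma deriv_truncFun (hη : 0 < η) (t : ℝ) : deriv (truncFun η) t = 1 / (1 + (η * t) ^ 2) := by
  have h : HasDerivAt (truncFun η) (1 / (1 + (η * t) ^ 2)) t := by
    refine HasDerivAt.congr_deriv ((((hasDerivAt_id t).const_mul η).arctan).div_const η) ?_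
    simp only [id, mul_one]
    field_simp
  exact h.deriv

lemma truncFun_nonneg (hη : 0 < η) {t : ℝ} (ht : 0 ≤ t) : 0 ≤ truncFun η t := by
  unfold truncFun
  have : 0 ≤ Real.arctan (η * t) := Real.arctan_nonneg.2 (by positivity)
  positivity

lemma truncFun_le (hη : 0 < η) {t : ℝ} (ht : 0 ≤ t) : truncFun η t ≤ t := by
  unfold truncFun
  rw [div_le_iff₀ hη]
  have h := Real.le_tan (x := Real.arctan (η * t)) (Real.arctan_nonneg.2 (by positivity))
    (Real.arctan_lt_pi_div_two _)
  rw [Real.tan_arctan] at h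
  linarith

lemma abs_truncFun_le (hη : 0 < η) (t : ℝ) : |truncFun η t| ≤ 2 / η := by
  unfold truncFun
  rw [abs_div, abs_of_pos hη]
  gcongr
  exact abs_arctan_le_two _

lemma abs_deriv_truncFun_le (hη : 0 < η) (t : ℝ) : |deriv (truncFun η) t| ≤ 1 := by
  rw [deriv_truncFun hη, abs_of_pos (by positivity), div_le_one (by positivity)]
  nlinarith [sq_nonneg (η * t)]

end cut

/-- The energy inequality, truncated: the test function is `cutFun η φⱼ · truncFun η u` with
`φⱼ → u`, and the term carrying `(cutFun η)'` has a good sign in the limit. -/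
lemma energy_le_trunc (hN : 1 ≤ N) {Ω : Set (Euc N)} (hΩo : IsOpen Ω)
    (hΩb : Bornology.IsBounded Ω) (hΩn : Ω.Nonempty) {m p lam mu : ℝ} (hm : 2 < m)
    (hlam : 0 < lam) (hmu : 0 < mu) {u : Euc N → ℝ} (hu : IsPosSol Ω m lam mu p u)
    (hsrc : IntegrableOn (fun x => (lam * u x ^ (m - 1) + mu * u x ^ (p - 1)) * u x) Ω)
    {η : ℝ} (hη : 0 < η) :
    ∫ x in Ω, cutFun η (u x) * deriv (truncFun η) (u x) * ‖gradient u x‖ ^ m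
      ≤ ∫ x in Ω, (lam * u x ^ (m - 1) + mu * u x ^ (p - 1)) * u x := by
  have hm0 : 0 < m := by linarith
  obtain ⟨φ, D, hφ, hD, hall⟩ := exists_approx hm0 hu.1 hu.2.1
  have hΦ : ∀ k, IsTestFun Ω (fun x => cutFun η (φ k x)) := fun k =>
    (hφ k).comp_left (contDiff_cutFun hη) (by simp [cutFun])
  have hweak := fun k => weak_form_mul_comp hN hΩo hΩb hΩn hm hu (hΦ k)
    (contDiff_truncFun (η := η)) (C := max (2 / η) 1)
    (fun t => (abs_truncFun_le hη t).trans (le_max_left _ _))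
    (fun t => (abs_deriv_truncFun_le hη t).trans (le_max_right _ _))
  obtain ⟨hW, hpos, -⟩ := hu
  have hum := aemeasurable_of_pos hm0 hW hpos
  have hcd : Differentiable ℝ (cutFun η) := (contDiff_cutFun hη).differentiable (by simp)
  have hcc : Continuous (cutFun η) := (contDiff_cutFun hη).continuous
  have hcc' : Continuous (deriv (cutFun η)) := (contDiff_cutFun hη).continuous_deriv (by simp)
  have htc : Continuous (truncFun η) := contDiff_truncFun.continuous
  have htc' : Continuous (deriv (truncFun η)) := contDiff_truncFun.continuous_deriv (by simp)
  have hgr : ∀ k x, gradient (fun y => cutFun η (φ k y)) x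
      = deriv (cutFun η) (φ k x) • gradient (φ k) x := fun k x =>
    gradient_comp hcd (hφ k).differentiable x
  have hlim := tendsto_integral_flux hm hW
    (w := fun k x => truncFun η (u x) • gradient (fun y => cutFun η (φ k y)) x
      + (cutFun η (φ k x) * deriv (truncFun η) (u x)) • gradient u x)
    (w₀ := fun x => truncFun η (u x) • (deriv (cutFun η) (u x) • gradient u x)
      + (cutFun η (u x) * deriv (truncFun η) (u x)) • gradient u x)
    (D := fun x => 2 ^ m * ((2 / η * (1 / η)) ^ m * D x + ‖gradient u x‖ ^ m))
    (fun k => ?_) (((hD.const_mul _).add hW.2.1).const_mul _) (fun k => ?_) ?_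
  · have hle : ∀ k, ∫ x in Ω, ‖gradient u x‖ ^ (m - 2) * ⟪gradient u x,
        truncFun η (u x) • gradient (fun y => cutFun η (φ k y)) x
        + (cutFun η (φ k x) * deriv (truncFun η) (u x)) • gradient u x⟫
        ≤ ∫ x in Ω, (lam * u x ^ (m - 1) + mu * u x ^ (p - 1)) * u x := fun k => by
      rw [(hweak k).2]
      refine integral_mono_ae (hweak k).1 hsrc ?_
      filter_upwards [hpos] with x hx
      have h1 := cutFun_le_one (η := η) (φ k x)
      have h2 := truncFun_le hη hx.le
      have h3 := truncFun_nonneg hη hx.le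
      have h4 : cutFun η (φ k x) * truncFun η (u x) ≤ u x := by nlinarith
      gcongr
    refine le_trans ?_ (le_of_tendsto' hlim hle)
    have hsq : ∀ x, ‖gradient u x‖ ^ (m - 2) * ⟪gradient u x,
        truncFun η (u x) • (deriv (cutFun η) (u x) • gradient u x)
        + (cutFun η (u x) * deriv (truncFun η) (u x)) • gradient u x⟫
        = truncFun η (u x) * deriv (cutFun η) (u x) * ‖gradient u x‖ ^ m
          + cutFun η (u x) * deriv (truncFun η) (u x) * ‖gradient u x‖ ^ m := fun x => by
      rw [← flux_self _ hm, inner_add_right, inner_smul_right, inner_smul_right, inner_smul_right]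
      ring
    simp only [hsq]
    have hbd1 : ∀ x, ‖truncFun η (u x) * deriv (cutFun η) (u x)‖ ≤ 2 / η * (1 / η) := fun x => by
      rw [norm_mul]
      exact mul_le_mul (abs_truncFun_le hη _) (abs_deriv_cutFun_le hη _) (abs_nonneg _)
        (by positivity)
    have hbd2 : ∀ x, ‖cutFun η (u x) * deriv (truncFun η) (u x)‖ ≤ 1 := fun x => by
      rw [norm_mul, Real.norm_of_nonneg (cutFun_nonneg _)]
      exact mul_le_one₀ (cutFun_le_one _) (norm_nonneg _) (abs_deriv_truncFun_le hη _)
    have hi1 : IntegrableOn (fun x => truncFun η (u x) * deriv (cutFun η) (u x)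
        * ‖gradient u x‖ ^ m) Ω :=
      hW.2.1.bdd_mul ((htc.measurable.comp_aemeasurable hum).mul
        (hcc'.measurable.comp_aemeasurable hum)).aestronglyMeasurable (Eventually.of_forall hbd1)
    have hi2 : IntegrableOn (fun x => cutFun η (u x) * deriv (truncFun η) (u x)
        * ‖gradient u x‖ ^ m) Ω :=
      hW.2.1.bdd_mul ((hcc.measurable.comp_aemeasurable hum).mul
        (htc'.measurable.comp_aemeasurable hum)).aestronglyMeasurable (Eventually.of_forall hbd2)
    refine integral_mono_ae hi2 (hi1.add hi2) ?_
    filter_upwards [hpos] with x hx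
    have h3 := truncFun_nonneg hη hx.le
    have h4 : 0 ≤ deriv (cutFun η) (u x) := by rw [deriv_cutFun hη]; positivity
    exact le_add_of_nonneg_left (by positivity)
  · refine AEMeasurable.aestronglyMeasurable ?_
    exact ((htc.measurable.comp_aemeasurable hum).smul (measurable_gradient' _).aemeasurable).add
      (((hΦ k).1.continuous.aemeasurable.mul (htc'.measurable.comp_aemeasurable hum)).smul
        (measurable_gradient' u).aemeasurable)
  · filter_upwards [hall] with x hx
    rw [hgr]
    have h1 : ‖truncFun η (u x) • (deriv (cutFun η) (φ k x) • gradient (φ k) x)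
        + (cutFun η (φ k x) * deriv (truncFun η) (u x)) • gradient u x‖
        ≤ 2 / η * (1 / η) * ‖gradient (φ k) x‖ + ‖gradient u x‖ := by
      refine (norm_add_le _ _).trans (add_le_add ?_ ?_)
      · rw [norm_smul, norm_smul, ← mul_assoc]
        gcongr
        · exact abs_truncFun_le hη _
        · exact abs_deriv_cutFun_le hη _
      · rw [norm_smul, norm_mul, Real.norm_of_nonneg (cutFun_nonneg _)]
        exact mul_le_of_le_one_left (norm_nonneg _)
          (mul_le_one₀ (cutFun_le_one _) (norm_nonneg _) (abs_deriv_truncFun_le hη _))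
    refine (Real.rpow_le_rpow (norm_nonneg _) h1 hm0.le).trans ?_
    refine (add_rpow_le_two_rpow (by positivity) (by positivity) hm0.le).trans ?_
    rw [Real.mul_rpow (by positivity) (norm_nonneg _)]
    gcongr
    exact (hx.2.1 k).2
  · filter_upwards [hall] with x hx
    simp only [hgr]
    exact ((((hcc'.tendsto _).comp hx.2.2.1).smul hx.2.2.2).const_smul _).add
      ((((hcc.tendsto _).comp hx.2.2.1).mul_const _).smul_const _)

/-- Testing the equation of `u` with `u` itself. Only the inequality needed later is proved; it is
the limit `η → 0` of `energy_le_trunc`. -/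
lemma energy_le (hN : 1 ≤ N) {Ω : Set (Euc N)} (hΩo : IsOpen Ω)
    (hΩb : Bornology.IsBounded Ω) (hΩn : Ω.Nonempty) {m p lam mu : ℝ} (hm : 2 < m)
    (hlam : 0 < lam) (hmu : 0 < mu) {u : Euc N → ℝ} (hu : IsPosSol Ω m lam mu p u)
    (hsrc : IntegrableOn (fun x => (lam * u x ^ (m - 1) + mu * u x ^ (p - 1)) * u x) Ω) :
    ∫ x in Ω, ‖gradient u x‖ ^ m
      ≤ ∫ x in Ω, (lam * u x ^ (m - 1) + mu * u x ^ (p - 1)) * u x := by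
  have hm0 : 0 < m := by linarith
  have hum := aemeasurable_of_pos hm0 hu.1 hu.2.1
  set η : ℕ → ℝ := fun n => 1 / ((n : ℝ) + 1) with hηdef
  have hη : ∀ n, 0 < η n := fun n => by simp only [hηdef]; positivity
  have hηlim : Tendsto η atTop (𝓝 0) := tendsto_one_div_add_atTop_nhds_zero_nat
  refine le_of_tendsto' (f := fun n => ∫ x in Ω,
    cutFun (η n) (u x) * deriv (truncFun (η n)) (u x) * ‖gradient u x‖ ^ m) (x := atTop) ?_
    fun n => energy_le_trunc hN hΩo hΩb hΩn hm hlam hmu hu hsrc (hη n)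
  refine tendsto_integral_of_dominated_convergence (fun x => ‖gradient u x‖ ^ m)
    (fun n => ?_) hu.1.2.1 (fun n => ?_) ?_
  · exact ((((contDiff_cutFun (hη n)).continuous.measurable.comp_aemeasurable hum).mul
      ((contDiff_truncFun.continuous_deriv (by simp)).measurable.comp_aemeasurable hum)).mul
      ((measurable_gradient' u).norm.pow_const _).aemeasurable).aestronglyMeasurable
  · filter_upwards with x
    rw [norm_mul, norm_mul, Real.norm_of_nonneg (cutFun_nonneg _),
      Real.norm_of_nonneg (by positivity : 0 ≤ ‖gradient u x‖ ^ m)]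
    exact mul_le_of_le_one_left (by positivity)
      (mul_le_one₀ (cutFun_le_one _) (norm_nonneg _) (abs_deriv_truncFun_le (hη n) _))
  · filter_upwards [hu.2.1] with x hx
    have h1 : Tendsto (fun n => cutFun (η n) (u x)) atTop (𝓝 1) := by
      have h := (tendsto_const_nhds (x := u x ^ 2)).div ((hηlim.pow 2).const_add (u x ^ 2))
        (by simp [hx.ne'])
      have e : u x ^ 2 / (u x ^ 2 + 0 ^ 2) = 1 := by
        rw [zero_pow two_ne_zero, add_zero, div_self (by positivity)]
      rw [e] at h
      exact h
    have h2 : Tendsto (fun n => deriv (truncFun (η n)) (u x)) atTop (𝓝 1) := by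
      simp only [fun n => deriv_truncFun (hη n) (u x)]
      have h := (tendsto_const_nhds (x := (1 : ℝ))).div
        (((hηlim.mul_const (u x)).pow 2).const_add 1) (by simp)
      have e : (1 : ℝ) / (1 + (0 * u x) ^ 2) = 1 := by simp
      rw [e] at h
      exact h
    simpa using (h1.mul h2).mul_const (‖gradient u x‖ ^ m)

/-! ### Ordered solutions coincide -/

/-- With `u ≤ v`, the chain `∫ (λ + μ v^(p-m)) u^m ≤ ∫ |∇u|^m ≤ ∫ (λ + μ u^(p-m)) u^m` from
`picone_integral` and `energy_le` leaves no room for `u < v` on a set of positive measure. -/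
lemma ae_eq_of_ae_le (hN : 1 ≤ N) {Ω : Set (Euc N)} (hΩo : IsOpen Ω)
    (hΩb : Bornology.IsBounded Ω) (hΩn : Ω.Nonempty) {m p lam mu : ℝ} (hm : 2 < m) (hmp : m < p)
    (hlam : 0 < lam) (hmu : 0 < mu) {u v : Euc N → ℝ} (hu : IsPosSol Ω m lam mu p u)
    (hv : IsPosSol Ω m lam mu p v) (huv : u ≤ᵐ[volume.restrict Ω] v) :
    u =ᵐ[volume.restrict Ω] v := by
  have hm0 : 0 < m := by linarith
  have hpm : 0 < p - m := by linarith
  have hum := aemeasurable_of_pos hm0 hu.1 hu.2.1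
  have hvm := aemeasurable_of_pos hm0 hv.1 hv.2.1
  have hpic := picone_integral hN hΩo hΩb hΩn hm hlam hmu hu.1 hu.2.1 hv
  set g : Euc N → ℝ := fun x => (lam + mu * v x ^ (p - m)) * u x ^ m with hg
  set h : Euc N → ℝ := fun x => (lam * u x ^ (m - 1) + mu * u x ^ (p - 1)) * u x with hh
  have hgm : AEMeasurable g (volume.restrict Ω) :=
    (((hvm.pow_const _).const_mul _).const_add _).mul (hum.pow_const _)
  have hhm : AEMeasurable h (volume.restrict Ω) :=
    (((hum.pow_const _).const_mul _).add ((hum.pow_const _).const_mul _)).mul hum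
  have hg0 : 0 ≤ᵐ[volume.restrict Ω] g := by
    filter_upwards [hu.2.1, hv.2.1] with x hux hvx
    simp only [hg, Pi.zero_apply]
    positivity
  have hgi : IntegrableOn g Ω :=
    lintegral_ofReal_ne_top_iff_integrable hgm.aestronglyMeasurable hg0 |>.1
      (ne_top_of_le_ne_top ENNReal.ofReal_ne_top hpic)
  have hgle : ∫ x in Ω, g x ≤ ∫ x in Ω, ‖gradient u x‖ ^ m := by
    rw [← ofReal_integral_eq_lintegral_ofReal hgi hg0] at hpic
    exact (ENNReal.ofReal_le_ofReal_iff (integral_nonneg fun x => by positivity)).1 hpic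
  have hheq : ∀ x, 0 < u x → h x = (lam + mu * u x ^ (p - m)) * u x ^ m := fun x hx => by
    have e1 : u x ^ (m - 1) * u x = u x ^ m := by
      rw [← Real.rpow_add_one hx.ne']; ring_nf
    have e2 : u x ^ (p - 1) * u x = u x ^ (p - m) * u x ^ m := by
      rw [← Real.rpow_add_one hx.ne', ← Real.rpow_add hx]; ring_nf
    simp only [hh]
    linear_combination lam * e1 + mu * e2
  have hhg : h ≤ᵐ[volume.restrict Ω] g := by
    filter_upwards [hu.2.1, huv] with x hux hx
    rw [hheq x hux]
    simp only [hg]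
    gcongr
  have hhi : IntegrableOn h Ω := by
    refine hgi.mono' hhm.aestronglyMeasurable ?_
    filter_upwards [hu.2.1, hhg] with x hux hx
    rw [Real.norm_of_nonneg]
    · exact hx
    · simp only [hh]; positivity
  have henergy := energy_le hN hΩo hΩb hΩn hm hlam hmu hu hhi
  have heq : h =ᵐ[volume.restrict Ω] g := by
    rw [← integral_eq_iff_of_ae_le hhi hgi hhg]
    exact le_antisymm (integral_mono_ae hhi hgi hhg) (hgle.trans henergy)
  filter_upwards [heq, hu.2.1, hv.2.1] with x hx hux hvx
  rw [hheq x hux] at hx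
  simp only [hg] at hx
  have h1 := mul_right_cancel₀ (Real.rpow_pos_of_pos hux m).ne' hx
  have h2 : u x ^ (p - m) = v x ^ (p - m) := mul_left_cancel₀ hmu.ne' (add_left_cancel h1)
  exact (Real.rpow_left_inj hux.le hvx.le hpm.ne').1 h2

/-- If `{x ∈ Ω | v x < u x}` is a null set, then `u ≤ v` almost everywhere on `Ω`. -/
lemma ae_le_of_volume_eq_zero {Ω : Set (Euc N)} (hΩo : IsOpen Ω) {u v : Euc N → ℝ}
    (h : volume {x ∈ Ω | v x < u x} = 0) : u ≤ᵐ[volume.restrict Ω] v := by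
  refine (ae_restrict_iff' hΩo.measurableSet).2 (ae_iff.2 ?_)
  refine measure_mono_null (fun x hx => ?_) h
  simpa using hx

/-- Lemma 2.7 of the paper: two distinct positive solutions of
`-Δ_m w = λ w^{m-1} + μ w^{p-1}` must have a sign-changing difference. -/
theorem difference_of_solutions_changes_sign
    (N : ℕ) (hN : 1 ≤ N) (Ω : Set (Euc N)) (hΩo : IsOpen Ω)
    (hΩb : Bornology.IsBounded Ω) (hΩc : IsConnected Ω)
    (m p lam mu : ℝ) (hm : 2 < m) (hmp : m < p) (hlam : 0 < lam) (hmu : 0 < mu)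
    (u v : Euc N → ℝ) (hu : IsPosSol Ω m lam mu p u) (hv : IsPosSol Ω m lam mu p v)
    (hne : ¬ u =ᵐ[volume.restrict Ω] v) :
    0 < volume {x ∈ Ω | v x < u x} ∧ 0 < volume {x ∈ Ω | u x < v x} := by
  refine ⟨pos_iff_ne_zero.2 fun h => hne ?_, pos_iff_ne_zero.2 fun h => hne ?_⟩
  · exact ae_eq_of_ae_le hN hΩo hΩb hΩc.nonempty hm hmp hlam hmu hu hv
      (ae_le_of_volume_eq_zero hΩo h)
  · exact (ae_eq_of_ae_le hN hΩo hΩb hΩc.nonempty hm hmp hlam hmu hv hu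
      (ae_le_of_volume_eq_zero hΩo h)).symm
end
end

section
/- Let m > 2 and z, w ∈ ℝ^N. Then for every ξ ∈ ℝ^N, ∫₀¹ ⟨D²ℋ(t z + (1-t) w) ξ, ξ⟩ dt ≥ (∫₀¹ |t z + (1-t) w|^{m-2} dt) |ξ|² ≥ (1/4^{m-1}) (|z| + |w|)^{m-2} |ξ|². -/
/-!
The first inequality holds pointwise under the integral: the second term of the Hessian form is
nonnegative, and at the origin both sides vanish. The form is measurable along the segment and, by
Cauchy–Schwarz, dominated by `(m - 1) |·|^{m-2} |ξ|²`, so it is integrable.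

For the second inequality, on the quarter of `[0, 1]` next to the endpoint of larger norm, the
triangle inequality gives `|t z + (1 - t) w| ≥ (3/4 - 1/4) max(|z|, |w|) ≥ (|z| + |w|) / 4`.
Integrating over this quarter alone yields `1/4 * ((|z| + |w|) / 4)^(m - 2)`, which is exactly the
claimed constant.
-/

open MeasureTheory Filter Metric Set
open scoped ENNReal NNReal RealInnerProductSpace Topology

noncomputable section

variable {N : ℕ}

lemma continuous_norm_segment_rpow {m : ℝ} (hm : 2 < m) (z w : Euc N) :
    Continuous fun t : ℝ => ‖t • z + (1 - t) • w‖ ^ (m - 2) :=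
  Continuous.rpow_const (by fun_prop) fun _ => Or.inr (by linarith)

lemma norm_rpow_mul_le_Qm {m : ℝ} (hm : 2 < m) (v ξ : Euc N) :
    ‖v‖ ^ (m - 2) * ‖ξ‖ ^ 2 ≤ Qm m v ξ := by
  unfold Qm
  split_ifs with h
  · rw [h, norm_zero, Real.zero_rpow (by linarith), zero_mul]
  · have h2 : 0 ≤ m - 2 := by linarith
    have : 0 ≤ (m - 2) * ‖v‖ ^ (m - 4) * ⟪v, ξ⟫ ^ 2 := by positivity
    linarith

lemma Qm_le {m : ℝ} (hm : 2 < m) (v ξ : Euc N) :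
    Qm m v ξ ≤ (m - 1) * (‖v‖ ^ (m - 2) * ‖ξ‖ ^ 2) := by
  have h2 : 0 ≤ m - 2 := by linarith
  unfold Qm
  split_ifs with h
  · have : 0 ≤ m - 1 := by linarith
    positivity
  · have hv : 0 < ‖v‖ := norm_pos_iff.mpr h
    have hcs : ⟪v, ξ⟫ ^ 2 ≤ ‖v‖ ^ 2 * ‖ξ‖ ^ 2 := by
      rw [← mul_pow, ← sq_abs]
      exact pow_le_pow_left₀ (abs_nonneg _) (abs_real_inner_le_norm v ξ) 2
    have hpow : ‖v‖ ^ (m - 2) = ‖v‖ ^ (m - 4) * ‖v‖ ^ 2 := by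
      rw [← Real.rpow_natCast, ← Real.rpow_add hv]
      congr 1
      push_cast
      ring
    have hmul := mul_le_mul_of_nonneg_left hcs
      (mul_nonneg h2 (Real.rpow_nonneg hv.le (m - 4)))
    have hrw : (m - 2) * ‖v‖ ^ (m - 4) * (‖v‖ ^ 2 * ‖ξ‖ ^ 2)
        = (m - 2) * (‖v‖ ^ (m - 2) * ‖ξ‖ ^ 2) := by
      rw [hpow]; ring
    linarith

lemma measurable_Qm (m : ℝ) (ξ : Euc N) : Measurable fun v : Euc N => Qm m v ξ := by
  unfold Qm
  refine Measurable.ite (measurableSet_singleton (0 : Euc N)) measurable_const ?_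
  fun_prop

lemma intervalIntegrable_Qm_segment {m : ℝ} (hm : 2 < m) (z w ξ : Euc N) :
    IntervalIntegrable (fun t : ℝ => Qm m (t • z + (1 - t) • w) ξ) volume 0 1 := by
  have hb : IntervalIntegrable
      (fun t : ℝ => (m - 1) * (‖t • z + (1 - t) • w‖ ^ (m - 2) * ‖ξ‖ ^ 2)) volume 0 1 :=
    (((continuous_norm_segment_rpow hm z w).mul_const _).const_mul _).intervalIntegrable 0 1
  have hmeas : Measurable fun t : ℝ => Qm m (t • z + (1 - t) • w) ξ :=
    (measurable_Qm m ξ).comp (by fun_prop)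
  refine hb.mono_fun' hmeas.aestronglyMeasurable (Eventually.of_forall fun t => ?_)
  have h0 := norm_rpow_mul_le_Qm hm (t • z + (1 - t) • w) ξ
  have h1 : 0 ≤ Qm m (t • z + (1 - t) • w) ξ := le_trans (by positivity) h0
  simpa only [Real.norm_of_nonneg h1] using Qm_le hm (t • z + (1 - t) • w) ξ

/-- A pointwise bound on a quarter-length subinterval already gives the full constant
`1 / 4 ^ (m - 1)`. -/
lemma lower_bound_of_quarter {m : ℝ} (hm : 2 < m) (z w : Euc N) {c d : ℝ}
    (hc : 0 ≤ c) (hd : d ≤ 1) (hcd : d - c = 1 / 4)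
    (h : ∀ t ∈ Icc c d, (‖z‖ + ‖w‖) / 4 ≤ ‖t • z + (1 - t) • w‖) :
    (1 / 4 ^ (m - 1) : ℝ) * (‖z‖ + ‖w‖) ^ (m - 2)
      ≤ ∫ t in (0 : ℝ)..1, ‖t • z + (1 - t) • w‖ ^ (m - 2) := by
  have hcont := continuous_norm_segment_rpow hm z w
  have hle : c ≤ d := by linarith
  have h2 : 0 ≤ m - 2 := by linarith
  calc (1 / 4 ^ (m - 1) : ℝ) * (‖z‖ + ‖w‖) ^ (m - 2)
      = ∫ _ in c..d, ((‖z‖ + ‖w‖) / 4) ^ (m - 2) := by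
        rw [intervalIntegral.integral_const, hcd, smul_eq_mul,
          Real.div_rpow (by positivity) (by norm_num),
          show m - 1 = 1 + (m - 2) by ring, Real.rpow_add (by norm_num), Real.rpow_one]
        field_simp
    _ ≤ ∫ t in c..d, ‖t • z + (1 - t) • w‖ ^ (m - 2) :=
        intervalIntegral.integral_mono_on hle (by simp) (hcont.intervalIntegrable c d)
          fun t ht => Real.rpow_le_rpow (by positivity) (h t ht) h2
    _ ≤ ∫ t in (0 : ℝ)..1, ‖t • z + (1 - t) • w‖ ^ (m - 2) :=
        intervalIntegral.integral_mono_interval hc hle hd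
          (Eventually.of_forall fun t => by positivity) (hcont.intervalIntegrable 0 1)

lemma norm_segment_lower {t : ℝ} (h0 : 0 ≤ t) (h1 : t ≤ 1) (z w : Euc N) :
    |t * ‖z‖ - (1 - t) * ‖w‖| ≤ ‖t • z + (1 - t) • w‖ := by
  have h := abs_norm_sub_norm_le (t • z) (-((1 - t) • w))
  rwa [sub_neg_eq_add, norm_neg, norm_smul, norm_smul, Real.norm_of_nonneg h0,
    Real.norm_of_nonneg (by linarith : 0 ≤ 1 - t)] at h

/-- Lemma A.3 used in (4.9) of the paper: lower bound on the averaged Hessian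
quadratic form along a segment. -/
theorem averaged_hessian_lower_bound
    (N : ℕ) (m : ℝ) (hm : 2 < m) (z w ξ : Euc N) :
    (∫ t in (0 : ℝ)..1, ‖t • z + (1 - t) • w‖ ^ (m - 2)) * ‖ξ‖ ^ 2
        ≤ (∫ t in (0 : ℝ)..1, Qm m (t • z + (1 - t) • w) ξ) ∧
    (1 / 4 ^ (m - 1) : ℝ) * (‖z‖ + ‖w‖) ^ (m - 2) * ‖ξ‖ ^ 2
        ≤ (∫ t in (0 : ℝ)..1, ‖t • z + (1 - t) • w‖ ^ (m - 2)) * ‖ξ‖ ^ 2 := by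
  constructor
  · rw [← intervalIntegral.integral_mul_const]
    exact intervalIntegral.integral_mono_on zero_le_one
      (((continuous_norm_segment_rpow hm z w).mul_const _).intervalIntegrable 0 1)
      (intervalIntegrable_Qm_segment hm z w ξ)
      fun t _ => norm_rpow_mul_le_Qm hm (t • z + (1 - t) • w) ξ
  · refine mul_le_mul_of_nonneg_right ?_ (by positivity)
    have hz := norm_nonneg z
    have hw := norm_nonneg w
    rcases le_total ‖w‖ ‖z‖ with hzw | hzw
    · refine lower_bound_of_quarter hm z w (c := 3 / 4) (d := 1) (by norm_num) le_rfl
        (by norm_num) fun t ht => ?_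
      have h := (le_abs_self _).trans
        (norm_segment_lower (by linarith [ht.1]) ht.2 z w)
      nlinarith [ht.1, ht.2, mul_nonneg (sub_nonneg.2 ht.1) hz, mul_nonneg (sub_nonneg.2 ht.1) hw]
    · refine lower_bound_of_quarter hm z w (c := 0) (d := 1 / 4) le_rfl (by norm_num)
        (by norm_num) fun t ht => ?_
      have h := (neg_le_abs _).trans
        (norm_segment_lower ht.1 (by linarith [ht.2]) z w)
      nlinarith [ht.1, ht.2, mul_nonneg (sub_nonneg.2 ht.2) hz, mul_nonneg (sub_nonneg.2 ht.2) hw]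
end
end
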